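/- arXiv:1708.03359 — 3 statements merged into one kernel-verified Lean document; each statement's English description precedes it below -/
import Mathlib

section
/- Let 0 < h_1 < … < h_n < 1 be reals, let P be an invertible real n×n matrix whose columns have unit Euclidean norm, let B be a real symmetric positive definite n×n matrix, let (a_ν) be positive reals with a_ν → ∞, let (B̂_ν) be random real symmetric n×n matrices with B̂_ν → B in probability (entrywise), and set W_ν := P D_{a_ν} B̂_ν D_{a_ν} Pᵀ. Then for each q ∈ {1, …, n} there exists a real number ξ_q > 0, depending only on B, P and h_1, …, h_n, such that λ_q(W_ν) / a_ν^{2 h_q} → ξ_q in probability as ν → ∞; moreover, the deterministic limit lim_{a→∞} λ_q(P D_a B D_a Pᵀ) / a^{2 h_q} = ξ_q also holds. -/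
/-!
Write `F(c, M)` for `λ_q(P D_c M D_c Pᵀ) / c ^ (2 h_q)`. Two observations carry the proof.

* If `(1 - ε) B ≤ M ≤ (1 + ε) B` in the Loewner order, then Weyl monotonicity (`eigR_le`) gives
  `|F(c, M) - F(c, B)| ≤ ε F(c, B)` for every `c > 0`. As `B` is positive definite, every symmetric
  `M` close to `B` satisfies this, so a limit of `F(c, B)` as `c → ∞` is also the joint limit of
  `F(c, M)` as `c → ∞` and `M → B` (`ratio_tendsto_prod`). Convergence in probability follows.

* Factor `B = L Lᵀ` with `L` upper triangular. The matrix `T_c = D_c L D_c⁻¹` has entries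
  `c ^ (h_i - h_j) L_ij`, so it tends to the diagonal part `Δ` of `L`. Since `X Xᵀ` and `Xᵀ X` have
  the same eigenvalues, with `X = P D_c L = P T_c D_c`, the pair `(P, B)` can be replaced by
  `(1, T_cᵀ Pᵀ P T_c)`, and by the first observation its second entry can be replaced by its
  positive definite limit `Δ Pᵀ P Δ` (`ratio_reduce`). Repeating this with the identity in place of
  `P` makes the limit diagonal, where the eigenvalues are read off (`ratio_diagonal`).
-/

open Matrix MeasureTheory Filter Topology

/-- The `q`-th smallest eigenvalue (`q` 0-indexed) of a real symmetric matrix. -/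
noncomputable def eigR {n : ℕ} (M : Matrix (Fin n) (Fin n) ℝ) (q : Fin n) : ℝ :=
  if h : M.IsHermitian then (h.eigenvalues ∘ Tuple.sort h.eigenvalues) q else 0

/-- `D_a := diag(a^{h_1},…,a^{h_n})`. -/
noncomputable def Dmat {n : ℕ} (h : Fin n → ℝ) (a : ℝ) : Matrix (Fin n) (Fin n) ℝ :=
  Matrix.diagonal fun i => a ^ h i

/-! ### Ordered eigenvalues -/

theorem eigR_mono {n : ℕ} (M : Matrix (Fin n) (Fin n) ℝ) : Monotone (eigR M) := by
  intro i j hij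
  by_cases h : M.IsHermitian
  · simp only [eigR, dif_pos h]
    exact Tuple.monotone_sort h.eigenvalues hij
  · simp only [eigR, dif_neg h, le_refl]

theorem eigR_pos {n : ℕ} {M : Matrix (Fin n) (Fin n) ℝ} (hM : M.PosDef) (i : Fin n) :
    0 < eigR M i := by
  unfold eigR
  rw [dif_pos hM.1]
  exact hM.eigenvalues_pos _

theorem eigR_congr {n : ℕ} {X Y : Matrix (Fin n) (Fin n) ℝ} (hX : X.IsHermitian)
    (hY : Y.IsHermitian) (h : X.charpoly = Y.charpoly) : eigR X = eigR Y := by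
  have := (hX.eigenvalues_eq_eigenvalues_iff hY).2 h
  funext q
  simp only [eigR, hX, hY, dif_pos, this]

theorem eigR_diagonal {n : ℕ} {d : Fin n → ℝ} (hd : Monotone d) : eigR (diagonal d) = d := by
  have hX : (diagonal d).IsHermitian := by simp [IsHermitian]
  have h1 := hX.roots_charpoly_eq_eigenvalues
  rw [charpoly_diagonal, Polynomial.roots_prod _ _
    (Finset.prod_ne_zero_iff.2 fun i _ => Polynomial.X_sub_C_ne_zero _)] at h1
  have h2 : Multiset.map d Finset.univ.val = Multiset.map hX.eigenvalues Finset.univ.val := by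
    simpa using h1
  have h3 : Multiset.map (hX.eigenvalues ∘ Tuple.sort hX.eigenvalues) Finset.univ.val
      = Multiset.map hX.eigenvalues Finset.univ.val := by
    rw [← Multiset.map_map, Multiset.map_univ_val_equiv]
  rw [← h2, Fin.univ_val_map, Fin.univ_val_map, Multiset.coe_eq_coe] at h3
  have h4 := h3.eq_of_sortedLE (Tuple.monotone_sort hX.eigenvalues).sortedLE_ofFn hd.sortedLE_ofFn
  funext q
  simp only [eigR, dif_pos hX]
  exact congrFun (List.ofFn_injective h4) q

/-- An orthonormal eigenbasis indexed so that the eigenvalues increase, stated through the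
quadratic form. -/
theorem exists_basis {n : ℕ} {M : Matrix (Fin n) (Fin n) ℝ} (hM : M.IsHermitian) :
    ∃ b : OrthonormalBasis (Fin n) ℝ (EuclideanSpace ℝ (Fin n)),
      ∀ x, x.ofLp ⬝ᵥ M *ᵥ x.ofLp = ∑ i, eigR M i * (b.repr x i) ^ 2 := by
  let σ := Tuple.sort hM.eigenvalues
  let b := hM.eigenvectorBasis.reindex σ.symm
  have hb : ∀ i, M *ᵥ (b i).ofLp = eigR M i • (b i).ofLp := by
    intro i
    simp only [eigR, hM, dif_pos, b, OrthonormalBasis.reindex_apply, Equiv.symm_symm]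
    exact hM.mulVec_eigenvectorBasis (σ i)
  refine ⟨b, fun x => ?_⟩
  have hs : (toEuclideanLin M).IsSymmetric := isSymmetric_toEuclideanLin_iff.2 hM
  have h1 : x.ofLp ⬝ᵥ M *ᵥ x.ofLp = inner ℝ x (toEuclideanLin M x) := by
    rw [EuclideanSpace.inner_eq_star_dotProduct, dotProduct_comm]
    simp
  rw [h1, ← b.sum_inner_mul_inner]
  refine Finset.sum_congr rfl fun i _ => ?_
  have h2 : toEuclideanLin M (b i) = eigR M i • b i := by
    ext j
    simpa using congrFun (hb i) j
  rw [← hs, h2, b.repr_apply_apply, inner_smul_left, real_inner_comm x]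
  simp
  ring

/-- Weyl monotonicity, with scalars: `c X ≤ d Y` as forms implies `c λ_q(X) ≤ d λ_q(Y)`. -/
theorem eigR_le {n : ℕ} {X Y : Matrix (Fin n) (Fin n) ℝ} (hX : X.IsHermitian)
    (hY : Y.IsHermitian) {c d : ℝ} (hc : 0 ≤ c) (hd : 0 ≤ d)
    (h : ∀ x : Fin n → ℝ, c * (x ⬝ᵥ X *ᵥ x) ≤ d * (x ⬝ᵥ Y *ᵥ x)) (q : Fin n) :
    c * eigR X q ≤ d * eigR Y q := by
  obtain ⟨bX, hbX⟩ := exists_basis hX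
  obtain ⟨bY, hbY⟩ := exists_basis hY
  -- A common kernel vector of these `n - 1` functionals lies both in the span of the eigenvectors
  -- of `X` with index at least `q` and in that of the eigenvectors of `Y` with index at most `q`.
  let f : EuclideanSpace ℝ (Fin n) →ₗ[ℝ] ({i : Fin n // i ≠ q} → ℝ) :=
    LinearMap.pi fun i => if i.1 < q then bX.toBasis.coord i.1 else bY.toBasis.coord i.1
  obtain ⟨x, hx0, hx⟩ : ∃ x, x ≠ 0 ∧ f x = 0 := by
    have : LinearMap.ker f ≠ ⊥ := by
      apply LinearMap.ker_ne_bot_of_finrank_lt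
      simp
      exact q.pos
    obtain ⟨x, hx, hx0⟩ := (Submodule.ne_bot_iff _).1 this
    exact ⟨x, hx0, hx⟩
  have e1 : ∀ i < q, bX.repr x i = 0 := by
    intro i hi
    have := congrFun hx ⟨i, hi.ne⟩
    simpa [f, hi] using this
  have e2 : ∀ i, q < i → bY.repr x i = 0 := by
    intro i hi
    have := congrFun hx ⟨i, hi.ne'⟩
    simpa [f, hi.le.not_gt] using this
  have n1 : ∑ i, (bX.repr x i) ^ 2 = ‖x‖ ^ 2 := by
    rw [← bX.repr.norm_map, EuclideanSpace.real_norm_sq_eq]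
  have n2 : ∑ i, (bY.repr x i) ^ 2 = ‖x‖ ^ 2 := by
    rw [← bY.repr.norm_map, EuclideanSpace.real_norm_sq_eq]
  have l1 : eigR X q * ‖x‖ ^ 2 ≤ x.ofLp ⬝ᵥ X *ᵥ x.ofLp := by
    rw [hbX, ← n1, Finset.mul_sum]
    refine Finset.sum_le_sum fun i _ => ?_
    rcases lt_or_ge i q with hi | hi
    · simp [e1 i hi]
    · exact mul_le_mul_of_nonneg_right (eigR_mono X hi) (sq_nonneg _)
  have l2 : x.ofLp ⬝ᵥ Y *ᵥ x.ofLp ≤ eigR Y q * ‖x‖ ^ 2 := by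
    rw [hbY, ← n2, Finset.mul_sum]
    refine Finset.sum_le_sum fun i _ => ?_
    rcases lt_or_ge q i with hi | hi
    · simp [e2 i hi]
    · exact mul_le_mul_of_nonneg_right (eigR_mono Y hi) (sq_nonneg _)
  have hpos : 0 < ‖x‖ ^ 2 := by positivity
  refine le_of_mul_le_mul_right ?_ hpos
  calc c * eigR X q * ‖x‖ ^ 2 = c * (eigR X q * ‖x‖ ^ 2) := by ring
    _ ≤ c * (x.ofLp ⬝ᵥ X *ᵥ x.ofLp) := mul_le_mul_of_nonneg_left l1 hc
    _ ≤ d * (x.ofLp ⬝ᵥ Y *ᵥ x.ofLp) := h _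
    _ ≤ d * (eigR Y q * ‖x‖ ^ 2) := mul_le_mul_of_nonneg_left l2 hd
    _ = d * eigR Y q * ‖x‖ ^ 2 := by ring

/-- A Cholesky factorization `B = L Lᵀ` with `L` upper (not lower) triangular. It comes from the LDL
decomposition of `B⁻¹`: if `J B⁻¹ Jᵀ = E` with `J` lower triangular and `E` diagonal, then
`B = Jᵀ E⁻¹ J`. -/
theorem exists_upper {n : ℕ} {B : Matrix (Fin n) (Fin n) ℝ} (hB : B.PosDef) :
    ∃ L : Matrix (Fin n) (Fin n) ℝ, (∀ i j, j < i → L i j = 0) ∧ (∀ i, L i i ≠ 0) ∧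
      B = L * Lᵀ := by
  have hBi := hB.inv
  let J := LDL.lowerInv hBi
  have hJt : ∀ i j, i < j → J i j = 0 := fun i j hij => LDL.lowerInv_triangular hBi hij
  have hJu : IsUnit J := isUnit_of_invertible J
  have hE : diagonal (LDL.diagEntries hBi) = J * B⁻¹ * Jᵀ := by
    have := LDL.diag_eq_lowerInv_conj hBi
    rwa [conjTranspose_eq_transpose_of_trivial] at this
  set e := LDL.diagEntries hBi
  have he : ∀ i, 0 < e i := by
    rw [← posDef_diagonal_iff, hE]
    have := (hJu.posDef_star_right_conjugate_iff (x := B⁻¹)).2 hBi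
    rwa [star_eq_conjTranspose, conjTranspose_eq_transpose_of_trivial] at this
  let L := Jᵀ * diagonal fun i => (√(e i))⁻¹
  have hLe : ∀ i j, L i j = J j i * (√(e j))⁻¹ := by
    intro i j
    simp [L, mul_diagonal]
  have hLt : ∀ i j, j < i → L i j = 0 := fun i j hij => by rw [hLe, hJt _ _ hij, zero_mul]
  have hBd : IsUnit B.det := (isUnit_iff_isUnit_det B).1 hB.isUnit
  have hJd : IsUnit J.det := (isUnit_iff_isUnit_det J).1 hJu
  have hBL : B = L * Lᵀ := by
    have hD : (diagonal fun i => (√(e i))⁻¹) * (diagonal fun i => (√(e i))⁻¹)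
        = (J * B⁻¹ * Jᵀ)⁻¹ := by
      symm
      apply inv_eq_left_inv
      rw [← hE, diagonal_mul_diagonal, diagonal_mul_diagonal, ← diagonal_one]
      congr 1
      funext i
      rw [← mul_inv, Real.mul_self_sqrt (he i).le, inv_mul_cancel₀ (he i).ne']
    have hJtd : IsUnit Jᵀ.det := by rwa [det_transpose]
    simp only [L, transpose_mul, diagonal_transpose, transpose_transpose]
    rw [Matrix.mul_assoc, ← Matrix.mul_assoc (diagonal _), hD, Matrix.mul_inv_rev, Matrix.mul_inv_rev,
      nonsing_inv_nonsing_inv _ hBd, Matrix.mul_assoc, Matrix.mul_assoc, nonsing_inv_mul _ hJd,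
      Matrix.mul_one, ← Matrix.mul_assoc, mul_nonsing_inv _ hJtd, Matrix.one_mul]
  refine ⟨L, hLt, ?_, hBL⟩
  have hdet : L.det ≠ 0 := by
    intro h
    apply hBd.ne_zero
    rw [hBL, det_mul, h, zero_mul]
  rw [det_of_isUpperTriangular (fun i j hij => hLt i j hij), Finset.prod_ne_zero_iff] at hdet
  exact fun i => hdet i (Finset.mem_univ i)

/-! ### Relative perturbation of the middle matrix -/

/-- Loewner form of `M → B`: since the form of `B` dominates a positive multiple of `∑ yᵢ²`,
entrywise closeness gives `(1 - ε) B ≤ M ≤ (1 + ε) B`. -/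
theorem eventually_form_close {n : ℕ} {B : Matrix (Fin n) (Fin n) ℝ} (hB : B.PosDef)
    {ε : ℝ} (hε : 0 < ε) :
    ∀ᶠ M in 𝓝 B, ∀ y : Fin n → ℝ, |y ⬝ᵥ M *ᵥ y - y ⬝ᵥ B *ᵥ y| ≤ ε * (y ⬝ᵥ B *ᵥ y) := by
  rcases isEmpty_or_nonempty (Fin n) with hn | hn
  · exact Eventually.of_forall fun M y => by simp [dotProduct]
  obtain ⟨i₀, hi₀⟩ := Finite.exists_min (eigR B)
  obtain ⟨b, hb⟩ := exists_basis hB.1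
  have hc := eigR_pos hB i₀
  have hlow : ∀ y : Fin n → ℝ, eigR B i₀ * ∑ i, y i ^ 2 ≤ y ⬝ᵥ B *ᵥ y := by
    intro y
    have h1 := hb (WithLp.toLp 2 y)
    have h2 : ∑ i, (b.repr (WithLp.toLp 2 y) i) ^ 2 = ∑ i, y i ^ 2 := by
      rw [← EuclideanSpace.real_norm_sq_eq, b.repr.norm_map, EuclideanSpace.real_norm_sq_eq]
    have h1' : y ⬝ᵥ B *ᵥ y = ∑ i, eigR B i * (b.repr (WithLp.toLp 2 y) i) ^ 2 := h1
    rw [h1', ← h2, Finset.mul_sum]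
    exact Finset.sum_le_sum fun i _ => mul_le_mul_of_nonneg_right (hi₀ i) (sq_nonneg _)
  have hcont : Tendsto (fun M : Matrix (Fin n) (Fin n) ℝ => ∑ i, ∑ j, |M i j - B i j|) (𝓝 B)
      (𝓝 0) := by
    have : Continuous fun M : Matrix (Fin n) (Fin n) ℝ => ∑ i, ∑ j, |M i j - B i j| := by
      fun_prop
    simpa using this.tendsto B
  filter_upwards [hcont.eventually_lt_const (mul_pos hε hc)] with M hM y
  have hentry : ∀ i j, |M i j - B i j| * (|y i| * |y j|) ≤
      |M i j - B i j| * ∑ k, y k ^ 2 := by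
    intro i j
    refine mul_le_mul_of_nonneg_left ?_ (abs_nonneg _)
    have e : ∀ k, y k ^ 2 ≤ ∑ k, y k ^ 2 := fun k =>
      Finset.single_le_sum (f := fun k => y k ^ 2) (fun _ _ => sq_nonneg _) (Finset.mem_univ k)
    nlinarith [sq_nonneg (|y i| - |y j|), e i, e j, sq_abs (y i), sq_abs (y j)]
  calc |y ⬝ᵥ M *ᵥ y - y ⬝ᵥ B *ᵥ y|
      = |∑ i, ∑ j, (M i j - B i j) * (y i * y j)| := by
        congr 1
        simp only [dotProduct, mulVec, Finset.mul_sum, ← Finset.sum_sub_distrib]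
        refine Finset.sum_congr rfl fun i _ => Finset.sum_congr rfl fun j _ => ?_
        ring
    _ ≤ ∑ i, ∑ j, |M i j - B i j| * (|y i| * |y j|) := by
        refine (Finset.abs_sum_le_sum_abs _ _).trans (Finset.sum_le_sum fun i _ => ?_)
        refine (Finset.abs_sum_le_sum_abs _ _).trans (Finset.sum_le_sum fun j _ => ?_)
        rw [abs_mul, abs_mul]
    _ ≤ ∑ i, ∑ j, |M i j - B i j| * ∑ k, y k ^ 2 :=
        Finset.sum_le_sum fun i _ => Finset.sum_le_sum fun j _ => hentry i j
    _ = (∑ i, ∑ j, |M i j - B i j|) * ∑ k, y k ^ 2 := by simp only [Finset.sum_mul]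
    _ ≤ (ε * eigR B i₀) * ∑ k, y k ^ 2 :=
        mul_le_mul_of_nonneg_right hM.le (Finset.sum_nonneg fun _ _ => sq_nonneg _)
    _ = ε * (eigR B i₀ * ∑ k, y k ^ 2) := by ring
    _ ≤ ε * (y ⬝ᵥ B *ᵥ y) := mul_le_mul_of_nonneg_left (hlow y) hε.le

/-- The `q`-th eigenvalue of `P D_c M D_c Pᵀ`, rescaled by its expected growth `c ^ (2 h_q)`. -/
noncomputable def ratio {n : ℕ} (h : Fin n → ℝ) (q : Fin n) (P : Matrix (Fin n) (Fin n) ℝ)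
    (c : ℝ) (M : Matrix (Fin n) (Fin n) ℝ) : ℝ :=
  eigR (P * Dmat h c * M * Dmat h c * Pᵀ) q / c ^ (2 * h q)

theorem Dmat_transpose {n : ℕ} (h : Fin n → ℝ) (c : ℝ) : (Dmat h c)ᵀ = Dmat h c := by
  simp [Dmat]

theorem sandwich_isHermitian {n : ℕ} (h : Fin n → ℝ) (P : Matrix (Fin n) (Fin n) ℝ) (c : ℝ)
    {M : Matrix (Fin n) (Fin n) ℝ} (hM : M.IsSymm) :
    (P * Dmat h c * M * Dmat h c * Pᵀ).IsHermitian := by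
  rw [IsHermitian, conjTranspose_eq_transpose_of_trivial]
  simp only [transpose_mul, transpose_transpose, Dmat_transpose, hM.eq, Matrix.mul_assoc]

theorem sandwich_form {n : ℕ} (h : Fin n → ℝ) (P : Matrix (Fin n) (Fin n) ℝ) (c : ℝ)
    (M : Matrix (Fin n) (Fin n) ℝ) (x : Fin n → ℝ) :
    x ⬝ᵥ (P * Dmat h c * M * Dmat h c * Pᵀ) *ᵥ x
      = ((Dmat h c * Pᵀ) *ᵥ x) ⬝ᵥ M *ᵥ ((Dmat h c * Pᵀ) *ᵥ x) := by
  have : P * Dmat h c * M * Dmat h c * Pᵀ = (Dmat h c * Pᵀ)ᵀ * (M * (Dmat h c * Pᵀ)) := by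
    simp only [transpose_mul, transpose_transpose, Dmat_transpose, Matrix.mul_assoc]
  rw [this, ← mulVec_mulVec, dotProduct_mulVec, vecMul_transpose, ← mulVec_mulVec x M]

/-- A relative bound on the forms passes to the rescaled eigenvalues, whatever `c` is. -/
theorem ratio_close {n : ℕ} (h : Fin n → ℝ) (q : Fin n) (P : Matrix (Fin n) (Fin n) ℝ)
    {B M : Matrix (Fin n) (Fin n) ℝ} (hB : B.IsSymm) (hM : M.IsSymm) {ε : ℝ} (hε : 0 < ε)
    (hε1 : ε < 1)
    (hBM : ∀ y : Fin n → ℝ, |y ⬝ᵥ M *ᵥ y - y ⬝ᵥ B *ᵥ y| ≤ ε * (y ⬝ᵥ B *ᵥ y))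
    {c : ℝ} (hc : 0 < c) : |ratio h q P c M - ratio h q P c B| ≤ ε * ratio h q P c B := by
  have hHM := sandwich_isHermitian h P c hM
  have hHB := sandwich_isHermitian h P c hB
  have up := eigR_le hHM hHB zero_le_one (by linarith : (0 : ℝ) ≤ 1 + ε) (fun x => by
    rw [sandwich_form, sandwich_form]
    have := (abs_le.1 (hBM ((Dmat h c * Pᵀ) *ᵥ x))).2
    linarith) q
  have lo := eigR_le hHB hHM (by linarith : (0 : ℝ) ≤ 1 - ε) zero_le_one (fun x => by
    rw [sandwich_form, sandwich_form]
    have := (abs_le.1 (hBM ((Dmat h c * Pᵀ) *ᵥ x))).1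
    linarith) q
  have hp : 0 < c ^ (2 * h q) := Real.rpow_pos_of_pos hc _
  unfold ratio
  rw [← sub_div, abs_div, abs_of_pos hp, ← mul_div_assoc, div_le_div_iff_of_pos_right hp, abs_le]
  constructor <;> linarith

/-- A limit at the fixed matrix `B` upgrades to a joint limit as `c → ∞` and `M → B` through
symmetric matrices. The bound of `ratio_close` is relative, hence uniform in `c`. -/
theorem ratio_tendsto_prod {n : ℕ} (h : Fin n → ℝ) (q : Fin n) (P : Matrix (Fin n) (Fin n) ℝ)
    {B : Matrix (Fin n) (Fin n) ℝ} (hB : B.PosDef) {ξ : ℝ}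
    (hξ : Tendsto (fun c => ratio h q P c B) atTop (𝓝 ξ)) :
    Tendsto (fun p : ℝ × Matrix (Fin n) (Fin n) ℝ => ratio h q P p.1 p.2)
      (atTop ×ˢ (𝓝 B ⊓ 𝓟 {M | M.IsSymm})) (𝓝 ξ) := by
  have hBs : B.IsSymm := by
    have := hB.1
    rwa [IsHermitian, conjTranspose_eq_transpose_of_trivial] at this
  have h1 : Tendsto (fun p : ℝ × Matrix (Fin n) (Fin n) ℝ => ratio h q P p.1 B)
      (atTop ×ˢ (𝓝 B ⊓ 𝓟 {M | M.IsSymm})) (𝓝 ξ) := hξ.comp tendsto_fst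
  have h2 : Tendsto (fun p : ℝ × Matrix (Fin n) (Fin n) ℝ =>
      ratio h q P p.1 p.2 - ratio h q P p.1 B)
      (atTop ×ˢ (𝓝 B ⊓ 𝓟 {M | M.IsSymm})) (𝓝 0) := by
    rw [Metric.tendsto_nhds]
    intro δ hδ
    have hK : 0 < |ξ| + 1 := by positivity
    obtain ⟨ε, hε, hε'⟩ : ∃ ε, 0 < ε ∧ ε < min 1 (δ / (|ξ| + 1)) :=
      exists_between (lt_min one_pos (div_pos hδ hK))
    have hM : ∀ᶠ p : ℝ × Matrix (Fin n) (Fin n) ℝ in atTop ×ˢ (𝓝 B ⊓ 𝓟 {M | M.IsSymm}),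
        p.2.IsSymm ∧
          ∀ y : Fin n → ℝ, |y ⬝ᵥ p.2 *ᵥ y - y ⬝ᵥ B *ᵥ y| ≤ ε * (y ⬝ᵥ B *ᵥ y) := by
      refine tendsto_snd.eventually (p := fun M : Matrix (Fin n) (Fin n) ℝ => M.IsSymm ∧
          ∀ y : Fin n → ℝ, |y ⬝ᵥ M *ᵥ y - y ⬝ᵥ B *ᵥ y| ≤ ε * (y ⬝ᵥ B *ᵥ y)) ?_
      exact (eventually_inf_principal.2 (Eventually.of_forall fun _ hM => hM)).and
        ((eventually_form_close hB hε).filter_mono inf_le_left)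
    filter_upwards [hM, tendsto_fst.eventually (eventually_gt_atTop (0 : ℝ)),
      h1.eventually_lt_const (lt_of_le_of_lt (le_abs_self ξ) (lt_add_one |ξ|))] with p hp hc hb
    rw [Real.dist_eq, sub_zero]
    have := ratio_close h q P hBs hp.1 hε (hε'.trans_le (min_le_left _ _)) hp.2 hc
    have h3 : ε * (|ξ| + 1) < δ := (lt_div_iff₀ hK).1 (hε'.trans_le (min_le_right _ _))
    nlinarith
  simpa using h2.add h1

/-! ### Triangular reduction -/

/-- Moving `D_c` across an upper triangular `L`: with `T_c = D_c L D_c⁻¹`, the matrices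
`P D_c L Lᵀ D_c Pᵀ = (P T_c D_c)(P T_c D_c)ᵀ` and `D_c (T_cᵀ Pᵀ P T_c) D_c` have the same
eigenvalues, and `T_c` tends to the diagonal part of `L`. -/
theorem ratio_reduce {n : ℕ} {h : Fin n → ℝ} (hmono : StrictMono h) (q : Fin n)
    (P L : Matrix (Fin n) (Fin n) ℝ) (hL : ∀ i j, j < i → L i j = 0)
    {S : Matrix (Fin n) (Fin n) ℝ} (hSdef : S = diagonal L.diag * (Pᵀ * P) * diagonal L.diag)
    (hS : S.PosDef) {ξ : ℝ}
    (hξ : Tendsto (fun c => ratio h q 1 c S) atTop (𝓝 ξ)) :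
    Tendsto (fun c => ratio h q P c (L * Lᵀ)) atTop (𝓝 ξ) := by
  -- The entries of `D_c L D_c⁻¹`; those above the diagonal carry a negative power of `c`.
  let T : ℝ → Matrix (Fin n) (Fin n) ℝ := fun c => of fun i j => c ^ (h i - h j) * L i j
  have hDL : ∀ c, 0 < c → Dmat h c * L = T c * Dmat h c := by
    intro c hc
    ext i j
    simp only [Dmat, diagonal_mul, mul_diagonal, T, of_apply]
    rw [mul_right_comm, ← Real.rpow_add hc, sub_add_cancel]
  have hT : Tendsto T atTop (𝓝 (diagonal L.diag)) := by
    refine tendsto_pi_nhds.2 fun i => tendsto_pi_nhds.2 fun j => ?_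
    rcases lt_trichotomy i j with hij | rfl | hij
    · have h1 : Tendsto (fun c : ℝ => c ^ (-(h j - h i)) * L i j) atTop (𝓝 (0 * L i j)) :=
        (tendsto_rpow_neg_atTop (sub_pos.2 (hmono hij))).mul_const _
      simpa [T, diagonal_apply_ne _ hij.ne] using h1
    · simp [T]
    · simp [T, diagonal_apply_ne _ hij.ne', hL _ _ hij]
  let G : ℝ → Matrix (Fin n) (Fin n) ℝ := fun c => (T c)ᵀ * (Pᵀ * P) * T c
  have hG : Tendsto G atTop (𝓝 S) := by
    have hc : Continuous fun X : Matrix (Fin n) (Fin n) ℝ => Xᵀ * (Pᵀ * P) * X := by fun_prop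
    have := (hc.tendsto (diagonal L.diag)).comp hT
    rwa [diagonal_transpose, ← hSdef] at this
  have hGs : ∀ c, (G c).IsSymm := by
    intro c
    simp only [IsSymm, G, transpose_mul, transpose_transpose, Matrix.mul_assoc]
  have hpair : Tendsto (fun c => (c, G c)) atTop (atTop ×ˢ (𝓝 S ⊓ 𝓟 {M | M.IsSymm})) :=
    tendsto_id.prodMk (tendsto_inf.2 ⟨hG, tendsto_principal.2 (Eventually.of_forall hGs)⟩)
  refine ((ratio_tendsto_prod h q 1 hS hξ).comp hpair).congr' ?_
  filter_upwards [eventually_gt_atTop (0 : ℝ)] with c hc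
  simp only [Function.comp, ratio]
  congr 1
  refine congrFun (eigR_congr (sandwich_isHermitian h 1 c (hGs c))
    (sandwich_isHermitian h P c ?_) ?_) q
  · simp [IsSymm]
  have e1 : P * Dmat h c * (L * Lᵀ) * Dmat h c * Pᵀ
      = (P * (T c * Dmat h c)) * (P * (T c * Dmat h c))ᵀ := by
    rw [← hDL c hc]
    simp only [transpose_mul, Dmat_transpose, Matrix.mul_assoc]
  have e2 : 1 * Dmat h c * G c * Dmat h c * 1ᵀ
      = (P * (T c * Dmat h c))ᵀ * (P * (T c * Dmat h c)) := by
    simp only [G, transpose_mul, Dmat_transpose, Matrix.mul_assoc, transpose_one, Matrix.mul_one,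
      Matrix.one_mul]
  rw [e1, e2, charpoly_mul_comm]

/-- For a positive diagonal matrix, the entries `c ^ (2 hᵢ) dᵢ` are sorted once `c` is large. -/
theorem ratio_diagonal {n : ℕ} {h : Fin n → ℝ} (hmono : StrictMono h) (q : Fin n)
    {d : Fin n → ℝ} (hd : ∀ i, 0 < d i) :
    Tendsto (fun c => ratio h q 1 c (diagonal d)) atTop (𝓝 (d q)) := by
  have hev : ∀ᶠ c : ℝ in atTop, ∀ i j, i < j → d i / d j ≤ c ^ (2 * (h j - h i)) := by
    simp only [eventually_all]
    intro i j hij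
    exact (tendsto_rpow_atTop (by linarith [hmono hij])).eventually_ge_atTop _
  refine tendsto_const_nhds.congr' ?_
  filter_upwards [hev, eventually_gt_atTop (0 : ℝ)] with c hc hc0
  have hm : Monotone fun i => c ^ (2 * h i) * d i := by
    intro i j hij
    rcases hij.eq_or_lt with rfl | hij
    · rfl
    have h1 := hc i j hij
    rw [div_le_iff₀ (hd j)] at h1
    calc c ^ (2 * h i) * d i ≤ c ^ (2 * h i) * (c ^ (2 * (h j - h i)) * d j) :=
          mul_le_mul_of_nonneg_left h1 (Real.rpow_pos_of_pos hc0 _).le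
      _ = c ^ (2 * h j) * d j := by
          rw [← mul_assoc, ← Real.rpow_add hc0]
          congr 2
          ring
  have e : 1 * Dmat h c * diagonal d * Dmat h c * 1ᵀ = diagonal fun i => c ^ (2 * h i) * d i := by
    simp only [Dmat, Matrix.one_mul, transpose_one, Matrix.mul_one, diagonal_mul_diagonal]
    congr 1
    funext i
    rw [mul_right_comm, ← Real.rpow_add hc0, two_mul]
  rw [ratio, e, eigR_diagonal hm, mul_div_cancel_left₀ _ (Real.rpow_pos_of_pos hc0 _).ne']

/-- Two triangular reductions lead from `(P, B)` to `(1, S)` and then to `(1, Δ)` with `Δ` diagonal;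
the limit is the `q`-th entry of `Δ`. -/
theorem exists_limit {n : ℕ} {h : Fin n → ℝ} (hmono : StrictMono h) (q : Fin n)
    {P : Matrix (Fin n) (Fin n) ℝ} (hP : IsUnit P) {B : Matrix (Fin n) (Fin n) ℝ}
    (hB : B.PosDef) :
    ∃ ξ : ℝ, 0 < ξ ∧ Tendsto (fun c => ratio h q P c B) atTop (𝓝 ξ) := by
  have key : ∀ L Q : Matrix (Fin n) (Fin n) ℝ, (∀ i, L i i ≠ 0) → IsUnit Q →
      (diagonal L.diag * (Qᵀ * Q) * diagonal L.diag).PosDef := by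
    intro L Q hL hQ
    have hu : IsUnit (Q * diagonal L.diag) := by
      refine hQ.mul ?_
      rw [isUnit_diagonal, Pi.isUnit_iff]
      exact fun i => (hL i).isUnit
    have := (hu.posDef_star_left_conjugate_iff (x := 1)).2 PosDef.one
    rw [star_eq_conjTranspose, conjTranspose_eq_transpose_of_trivial] at this
    simpa [Matrix.mul_assoc] using this
  obtain ⟨L, hLt, hLd, rfl⟩ := exists_upper hB
  have hS := key L P hLd hP
  obtain ⟨V, hVt, hVd, hSV⟩ := exists_upper hS
  have hS' := key V 1 hVd isUnit_one
  refine ⟨V q q * V q q, mul_self_pos.2 (hVd q), ratio_reduce hmono q P L hLt rfl hS ?_⟩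
  rw [hSV]
  refine ratio_reduce hmono q 1 V hVt rfl hS' ?_
  have e : diagonal V.diag * ((1 : Matrix (Fin n) (Fin n) ℝ)ᵀ * 1) * diagonal V.diag
      = diagonal fun i => V i i * V i i := by
    simp
  rw [e]
  exact ratio_diagonal hmono q fun i => mul_self_pos.2 (hVd i)

/-! ### Convergence in probability -/

/-- A joint limit of `F` as `c → ∞` and `M → B` through symmetric matrices transfers to
convergence in measure along random symmetric matrices converging to `B` in measure. -/
theorem tendstoInMeasure_of_tendsto_prod {n : ℕ} {Ω : Type*} [MeasurableSpace Ω] {μ : Measure Ω}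
    {F : ℝ → Matrix (Fin n) (Fin n) ℝ → ℝ} {B : Matrix (Fin n) (Fin n) ℝ} {ξ : ℝ}
    (hprod : Tendsto (fun p : ℝ × Matrix (Fin n) (Fin n) ℝ => F p.1 p.2)
      (atTop ×ˢ (𝓝 B ⊓ 𝓟 {M | M.IsSymm})) (𝓝 ξ))
    {a : ℕ → ℝ} (ha : Tendsto a atTop atTop) {Bhat : ℕ → Ω → Matrix (Fin n) (Fin n) ℝ}
    (hBhat_symm : ∀ ν ω, (Bhat ν ω).IsSymm)
    (hBhat_lim : ∀ i j : Fin n,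
      TendstoInMeasure μ (fun ν ω => Bhat ν ω i j) atTop (fun _ => B i j)) :
    TendstoInMeasure μ (fun ν ω => F (a ν) (Bhat ν ω)) atTop (fun _ => ξ) := by
  rw [tendstoInMeasure_iff_dist]
  intro ε hε
  obtain ⟨s, hs, t, ht, hst⟩ := mem_prod_iff.1 (Metric.tendsto_nhds.1 hprod ε hε)
  rw [mem_inf_principal] at ht
  -- Entrywise closeness to `B` describes a neighbourhood of `B`.
  obtain ⟨δ, hδ, hball⟩ : ∃ δ > 0, ∀ M : Matrix (Fin n) (Fin n) ℝ,
      (∀ i j, dist (M i j) (B i j) < δ) → M.IsSymm → M ∈ t := by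
    have hc : Tendsto (fun M : Fin n → Fin n → ℝ => (of M : Matrix (Fin n) (Fin n) ℝ))
        (𝓝 (fun i j => B i j)) (𝓝 B) := tendsto_id
    obtain ⟨δ, hδ, hb⟩ := Metric.mem_nhds_iff.1 (hc ht)
    refine ⟨δ, hδ, fun M hM hMs => hb (a := fun i j => M i j) ?_ hMs⟩
    exact Metric.mem_ball.2 ((dist_pi_lt_iff hδ).2 fun i => (dist_pi_lt_iff hδ).2 fun j => hM i j)
  have hsum : Tendsto (fun ν => ∑ i, ∑ j, μ {ω | δ ≤ dist (Bhat ν ω i j) (B i j)}) atTop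
      (𝓝 0) := by
    have : Tendsto (fun ν => ∑ i, ∑ j, μ {ω | δ ≤ dist (Bhat ν ω i j) (B i j)}) atTop
        (𝓝 (∑ _i : Fin n, ∑ _j : Fin n, 0)) :=
      tendsto_finsetSum _ fun i _ => tendsto_finsetSum _ fun j _ =>
        tendstoInMeasure_iff_dist.1 (hBhat_lim i j) δ hδ
    simpa using this
  refine tendsto_of_tendsto_of_tendsto_of_le_of_le' tendsto_const_nhds hsum
    (Eventually.of_forall fun _ => zero_le) ?_
  filter_upwards [ha hs] with ν hν
  calc μ {ω | ε ≤ dist (F (a ν) (Bhat ν ω)) ξ}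
      ≤ μ (⋃ i, ⋃ j, {ω | δ ≤ dist (Bhat ν ω i j) (B i j)}) := by
        refine measure_mono fun ω hω => ?_
        by_contra hcon
        simp only [Set.mem_iUnion, Set.mem_ofPred_eq, not_exists, not_le] at hcon
        have hmem : (a ν, Bhat ν ω) ∈ s ×ˢ t := ⟨hν, hball _ hcon (hBhat_symm ν ω)⟩
        have hlt : dist (F (a ν) (Bhat ν ω)) ξ < ε := hst hmem
        exact absurd hlt (not_lt.2 hω)
    _ ≤ ∑ i, μ (⋃ j, {ω | δ ≤ dist (Bhat ν ω i j) (B i j)}) := measure_iUnion_fintype_le _ _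
    _ ≤ ∑ i, ∑ j, μ {ω | δ ≤ dist (Bhat ν ω i j) (B i j)} :=
        Finset.sum_le_sum fun i _ => measure_iUnion_fintype_le _ _

/-- Proposition 3.1(i): with `0 < h_1 < ⋯ < h_n < 1`, `P` invertible with unit
columns, `B` symmetric positive definite, `a_ν → ∞` and random symmetric `B̂_ν → B` in
probability, setting `W_ν := P D_{a_ν} B̂_ν D_{a_ν} Pᵀ`, for each `q` there is `ξ_q > 0`
(depending only on `B`, `P`, `h`) with `λ_q(W_ν)/a_ν^{2h_q} → ξ_q` in probability, and also
`λ_q(P D_a B D_a Pᵀ)/a^{2h_q} → ξ_q` as `a → ∞`. -/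
theorem stmt3 {n : ℕ}
    {Ω : Type*} [MeasurableSpace Ω] (μ : Measure Ω) [IsProbabilityMeasure μ]
    (h : Fin n → ℝ) (hmono : StrictMono h)
    (h0 : ∀ i, 0 < h i) (h1 : ∀ i, h i < 1)
    (P : Matrix (Fin n) (Fin n) ℝ) (hP : IsUnit P)
    (hPcol : ∀ j, ∑ i, P i j ^ 2 = 1)
    (B : Matrix (Fin n) (Fin n) ℝ) (hB : B.PosDef)
    (a : ℕ → ℝ) (ha_pos : ∀ ν, 0 < a ν) (ha : Tendsto a atTop atTop)
    (Bhat : ℕ → Ω → Matrix (Fin n) (Fin n) ℝ)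
    (hBhat_meas : ∀ ν (i j : Fin n), Measurable fun ω => Bhat ν ω i j)
    (hBhat_symm : ∀ ν ω, (Bhat ν ω).IsSymm)
    (hBhat_lim : ∀ i j : Fin n,
      TendstoInMeasure μ (fun ν ω => Bhat ν ω i j) atTop (fun _ => B i j))
    (q : Fin n) :
    ∃ ξ : ℝ, 0 < ξ ∧
      TendstoInMeasure μ
        (fun ν ω =>
          eigR (P * Dmat h (a ν) * Bhat ν ω * Dmat h (a ν) * Pᵀ) q / a ν ^ (2 * h q))
        atTop (fun _ => ξ) ∧
      Tendsto (fun c : ℝ => eigR (P * Dmat h c * B * Dmat h c * Pᵀ) q / c ^ (2 * h q))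
        atTop (𝓝 ξ) := by
  obtain ⟨ξ, hξ, hlim⟩ := exists_limit hmono q hP hB
  exact ⟨ξ, hξ, tendstoInMeasure_of_tendsto_prod (ratio_tendsto_prod h q P hB hlim) ha
    hBhat_symm hBhat_lim, hlim⟩
end

section
/- Let 0 < h_1 < … < h_n < 1 be reals and let P be an invertible real n×n matrix whose columns have unit Euclidean norm. For every real symmetric positive definite n×n matrix B and every q ∈ {1, …, n}, the limit ξ_q(B) := lim_{a→∞} λ_q(P D_a B D_a Pᵀ) / a^{2 h_q} exists and is strictly positive, and it satisfies the scaling relation ξ_q(D_c B D_c) = c^{2 h_q} ξ_q(B) for every c > 0. In particular, ξ_n(B) = B_{nn}, the (n,n) entry of B. -/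
/-!
Write `H = QᵀQ` with `Q = (Pᵀ)⁻¹`, and put `Pᵀx = y`. Then the Rayleigh quotient of
`P D_a B D_a Pᵀ` at `x` is `(yᵀ D_a B D_a y) / (yᵀ H y)`. To compare it with `τ a^{2h_q}`, rescale
by `y = E z` with `E = diag(a^{-max(h_i, h_q)})`. As `a → ∞` the form
`z ↦ zᵀ E (D_a B D_a - τ a^{2h_q} H) E z` converges to `B` restricted to the coordinates `≥ q`
minus `τ H` restricted to the coordinates `≤ q` (`scaled_form`, `tendsto_scaleMat`).

Only the coordinate `q` is shared by the two blocks. Let `β` be the minimum of `yᵀBy` over `y`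
supported on `≥ q` with `y_q = 1`, attained at `w`, and let `η` be the minimum of `xᵀHx` over `x`
supported on `≤ q` with `x_q = 1`, attained at `u`. If `τ η < β`, the limit form is positive
definite on the span of `u` and the `e_i`, `i > q`; if `β < τ η`, it is negative definite on the
span of `w` and the `e_i`, `i < q` (`limit_form_pos`). Definiteness on a fixed subspace is an open
condition (`eventually_form_pos`), so it persists for large `a`, and a Courant–Fischer dimension
count (`lt_eigR`, `eigR_lt`) gives `λ_q > τ a^{2h_q}`, respectively `λ_q < τ a^{2h_q}`. Hence
`ξ_q = β / η > 0`.

The scaling relation follows from `D_a D_c = D_{ac}`. For the last index, `w = e_n`, so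
`β = B_nn`, and `H u = η e_n`, so `1 = u_n = η (PᵀP)_nn = η` because the columns of `P` are unit
vectors.
-/

open Matrix Filter Topology

/-! ### Courant–Fischer bounds for sorted eigenvalues -/

/-- Spectral theorem with the eigenvalues listed in increasing order. -/
lemma eigR_spectral {n : ℕ} {M : Matrix (Fin n) (Fin n) ℝ} (hM : M.IsHermitian) :
    Monotone (eigR M) ∧ ∃ U : Matrix (Fin n) (Fin n) ℝ,
      U * Uᵀ = 1 ∧ M = U * Matrix.diagonal (eigR M) * Uᵀ := by
  have he : eigR M = hM.eigenvalues ∘ Tuple.sort hM.eigenvalues := by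
    funext q
    simp only [eigR, dif_pos hM]
  refine ⟨he ▸ Tuple.monotone_sort _, ?_⟩
  set σ := Tuple.sort hM.eigenvalues
  set V : Matrix (Fin n) (Fin n) ℝ := (hM.eigenvectorUnitary : Matrix (Fin n) (Fin n) ℝ)
  have hV : V * Vᵀ = 1 := by
    have := (Matrix.mem_unitaryGroup_iff).1 hM.eigenvectorUnitary.2
    simpa [Matrix.star_eq_conjTranspose, Matrix.conjTranspose_eq_transpose_of_trivial] using this
  have hs : M = V * Matrix.diagonal hM.eigenvalues * Vᵀ := by
    have := hM.spectral_theorem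
    rw [Unitary.conjStarAlgAut_apply] at this
    simpa [Matrix.star_eq_conjTranspose, Matrix.conjTranspose_eq_transpose_of_trivial] using this
  refine ⟨V.submatrix id σ, ?_, ?_⟩
  · rw [Matrix.transpose_submatrix, Matrix.submatrix_mul_equiv, hV, Matrix.submatrix_id_id]
  · have hd : Matrix.diagonal (eigR M) =
        (Matrix.diagonal hM.eigenvalues).submatrix σ σ := by
      rw [he, Matrix.submatrix_diagonal_equiv]
    rw [hd, Matrix.transpose_submatrix, Matrix.submatrix_mul_equiv, Matrix.submatrix_mul_equiv,
      Matrix.submatrix_id_id]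
    exact hs

/-- The spectral theorem as a statement about quadratic forms: `U *ᵥ x` collects the coordinates
of `x` in an orthonormal eigenbasis ordered by increasing eigenvalue. -/
lemma eigR_forms {n : ℕ} {M : Matrix (Fin n) (Fin n) ℝ} (hM : M.IsHermitian) :
    Monotone (eigR M) ∧ ∃ U : Matrix (Fin n) (Fin n) ℝ, ∀ x : Fin n → ℝ,
      x ⬝ᵥ x = ∑ i, ((U *ᵥ x) i) ^ 2 ∧
      x ⬝ᵥ (M *ᵥ x) = ∑ i, eigR M i * ((U *ᵥ x) i) ^ 2 := by
  obtain ⟨hmon, U, hU, hs⟩ := eigR_spectral hM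
  refine ⟨hmon, Uᵀ, fun x => ⟨?_, ?_⟩⟩
  · calc x ⬝ᵥ x = x ⬝ᵥ ((U * Uᵀ) *ᵥ x) := by rw [hU, Matrix.one_mulVec]
      _ = (Uᵀ *ᵥ x) ⬝ᵥ (Uᵀ *ᵥ x) := by
        rw [← Matrix.mulVec_mulVec, Matrix.dotProduct_mulVec, Matrix.mulVec_transpose]
      _ = _ := by simp [dotProduct, sq]
  · calc x ⬝ᵥ (M *ᵥ x) = x ⬝ᵥ ((U * Matrix.diagonal (eigR M) * Uᵀ) *ᵥ x) := by rw [← hs]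
      _ = (Uᵀ *ᵥ x) ⬝ᵥ (Matrix.diagonal (eigR M) *ᵥ (Uᵀ *ᵥ x)) := by
        rw [← Matrix.mulVec_mulVec, ← Matrix.mulVec_mulVec, Matrix.dotProduct_mulVec,
          Matrix.mulVec_transpose]
      _ = _ := by
        simp only [dotProduct, Matrix.mulVec_diagonal]
        exact Finset.sum_congr rfl fun i _ => by ring

lemma exists_ne_zero_coords_vanish {n : ℕ} {ι : Type*} [Fintype ι]
    (L : (ι → ℝ) →ₗ[ℝ] (Fin n → ℝ)) (J : Fin n → Prop) [DecidablePred J]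
    (hcard : Fintype.card {j // J j} < Fintype.card ι) :
    ∃ v : ι → ℝ, v ≠ 0 ∧ ∀ j, J j → L v j = 0 := by
  have hk := LinearMap.ker_ne_bot_of_finrank_lt
    (f := (LinearMap.funLeft ℝ ℝ (Subtype.val : {j // J j} → Fin n)).comp L) (by simpa using hcard)
  obtain ⟨v, hv, hv0⟩ := Submodule.exists_mem_ne_zero_of_ne_bot hk
  refine ⟨v, hv0, fun j hj => ?_⟩
  exact congrFun (LinearMap.mem_ker.1 hv) ⟨j, hj⟩

/-- Lower Courant–Fischer bound: if the Rayleigh quotient of `M` exceeds `s` on the image of a space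
of dimension `n - q` (0-indexed `q`), then `s < λ_q`. That image contains a nonzero vector without
components along the eigenvectors of index `> q`. Injectivity of `L` is implied by `hL`. -/
lemma lt_eigR {n : ℕ} {M : Matrix (Fin n) (Fin n) ℝ} (hM : M.IsHermitian) (q : Fin n)
    (s : ℝ) (L : ({i // q ≤ i} → ℝ) →ₗ[ℝ] (Fin n → ℝ))
    (hL : ∀ v, v ≠ 0 → s * (L v ⬝ᵥ L v) < L v ⬝ᵥ (M *ᵥ L v)) : s < eigR M q := by
  obtain ⟨hmon, U, hU⟩ := eigR_forms hM
  obtain ⟨v, hv0, hv⟩ := exists_ne_zero_coords_vanish (U.mulVecLin.comp L) (fun j => q < j)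
    (Fintype.card_lt_of_injective_of_notMem
      (fun j : {j // q < j} => (⟨j.1, j.2.le⟩ : {i // q ≤ i}))
      (fun a b hab => by simpa [Subtype.ext_iff] using hab) (b := ⟨q, le_rfl⟩)
      (by rintro ⟨⟨j, hj⟩, hjq⟩; simp at hjq; exact hj.ne' hjq))
  have h1 := hL v hv0
  obtain ⟨e1, e2⟩ := hU (L v)
  have h2 : L v ⬝ᵥ (M *ᵥ L v) ≤ eigR M q * (L v ⬝ᵥ L v) := by
    rw [e1, e2, Finset.mul_sum]
    refine Finset.sum_le_sum fun i _ => ?_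
    rcases lt_or_ge q i with hi | hi
    · have : (U *ᵥ L v) i = 0 := hv i hi
      simp [this]
    · exact mul_le_mul_of_nonneg_right (hmon hi) (sq_nonneg _)
  have h3 : 0 ≤ L v ⬝ᵥ L v := by rw [e1]; positivity
  by_contra hcon
  nlinarith [mul_le_mul_of_nonneg_right (not_lt.1 hcon) h3]

/-- Upper Courant–Fischer bound, dual to `lt_eigR`: the test space has dimension `q + 1` and the
vector picked in it has no components along the eigenvectors of index `< q`. -/
lemma eigR_lt {n : ℕ} {M : Matrix (Fin n) (Fin n) ℝ} (hM : M.IsHermitian) (q : Fin n)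
    (s : ℝ) (L : ({i // i ≤ q} → ℝ) →ₗ[ℝ] (Fin n → ℝ))
    (hL : ∀ v, v ≠ 0 → L v ⬝ᵥ (M *ᵥ L v) < s * (L v ⬝ᵥ L v)) : eigR M q < s := by
  obtain ⟨hmon, U, hU⟩ := eigR_forms hM
  obtain ⟨v, hv0, hv⟩ := exists_ne_zero_coords_vanish (U.mulVecLin.comp L) (fun j => j < q)
    (Fintype.card_lt_of_injective_of_notMem
      (fun j : {j // j < q} => (⟨j.1, j.2.le⟩ : {i // i ≤ q}))
      (fun a b hab => by simpa [Subtype.ext_iff] using hab) (b := ⟨q, le_rfl⟩)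
      (by rintro ⟨⟨j, hj⟩, hjq⟩; simp at hjq; exact hj.ne hjq))
  have h1 := hL v hv0
  obtain ⟨e1, e2⟩ := hU (L v)
  have h2 : eigR M q * (L v ⬝ᵥ L v) ≤ L v ⬝ᵥ (M *ᵥ L v) := by
    rw [e1, e2, Finset.mul_sum]
    refine Finset.sum_le_sum fun i _ => ?_
    rcases lt_or_ge i q with hi | hi
    · have : (U *ᵥ L v) i = 0 := hv i hi
      simp [this]
    · exact mul_le_mul_of_nonneg_right (hmon hi) (sq_nonneg _)
  have h3 : 0 ≤ L v ⬝ᵥ L v := by rw [e1]; positivity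
  by_contra hcon
  nlinarith [mul_le_mul_of_nonneg_right (not_lt.1 hcon) h3]

/-! ### Quadratic forms -/

/-- Positive definiteness along a fixed finite-dimensional parametrisation is stable under small
perturbations of the matrix, by compactness of the unit sphere and homogeneity. -/
lemma eventually_form_pos {n : ℕ} {ι α : Type*} [Fintype ι] {l : Filter α}
    (T : (ι → ℝ) →ₗ[ℝ] (Fin n → ℝ)) {N : α → Matrix (Fin n) (Fin n) ℝ}
    {K : Matrix (Fin n) (Fin n) ℝ} (hN : Tendsto N l (𝓝 K))
    (hK : ∀ v, v ≠ 0 → 0 < T v ⬝ᵥ (K *ᵥ T v)) :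
    ∀ᶠ a in l, ∀ v, v ≠ 0 → 0 < T v ⬝ᵥ (N a *ᵥ T v) := by
  have hT : Continuous T := T.continuous_of_finiteDimensional
  have hcont : Continuous fun p : Matrix (Fin n) (Fin n) ℝ × (ι → ℝ) =>
      T p.2 ⬝ᵥ (p.1 *ᵥ T p.2) := by fun_prop
  have hS : ∀ᶠ A in 𝓝 K, ∀ v ∈ Metric.sphere (0 : ι → ℝ) 1, 0 < T v ⬝ᵥ (A *ᵥ T v) := by
    refine (isCompact_sphere (0 : ι → ℝ) 1).eventually_forall_of_forall_eventually fun v hv => ?_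
    refine hcont.continuousAt.eventually (lt_mem_nhds (hK v ?_))
    rintro rfl
    simp at hv
  filter_upwards [hN.eventually hS] with a ha v hv
  have hn : 0 < ‖v‖ := norm_pos_iff.2 hv
  have := ha (‖v‖⁻¹ • v) (by simp [norm_smul, hn.ne'])
  rw [map_smul, Matrix.mulVec_smul, smul_dotProduct, dotProduct_smul, smul_eq_mul,
    smul_eq_mul] at this
  exact pos_of_mul_pos_right (pos_of_mul_pos_right this (by positivity)) (by positivity)

/-- The vector `w` minimising `wᵀAw` among vectors supported on `S` with `w_q = 1`, characterised by
its stationarity equations. It is the normalised `q`-th column of the inverse of the principal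
submatrix of `A` on `S`. -/
lemma exists_minimizer {n : ℕ} {A : Matrix (Fin n) (Fin n) ℝ} (hA : A.PosDef)
    (S : Fin n → Prop) [DecidablePred S] {q : Fin n} (hq : S q) :
    ∃ w : Fin n → ℝ, w q = 1 ∧ (∀ i, ¬ S i → w i = 0) ∧
      ∀ i, S i → i ≠ q → (A *ᵥ w) i = 0 := by
  set A' : Matrix {i // S i} {i // S i} ℝ := A.submatrix Subtype.val Subtype.val
  have hA' : A'.PosDef := hA.submatrix Subtype.val_injective
  set q' : {i // S i} := ⟨q, hq⟩
  have hpos : 0 < A'⁻¹ q' q' := hA'.inv.diag_pos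
  set v : {i // S i} → ℝ := A'⁻¹ *ᵥ Pi.single q' 1
  have hv : v q' = A'⁻¹ q' q' := by simp [v]
  have hAv : A' *ᵥ v = Pi.single q' 1 := by
    rw [Matrix.mulVec_mulVec, Matrix.mul_nonsing_inv _ ((Matrix.isUnit_iff_isUnit_det _).1 hA'.isUnit),
      Matrix.one_mulVec]
  refine ⟨fun i => if hi : S i then v ⟨i, hi⟩ / v q' else 0, ?_, ?_, ?_⟩
  · simp only [dif_pos hq]
    exact div_self (by rw [hv]; exact hpos.ne')
  · intro i hi
    simp [hi]
  · intro i hi hiq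
    have h1 : (A' *ᵥ v) ⟨i, hi⟩ = 0 := by
      rw [hAv, Pi.single_eq_of_ne]
      exact fun h => hiq (congrArg Subtype.val h)
    have h2 : ∑ j : {j // S j}, A i j * (v j / v q') = 0 := by
      have : (A' *ᵥ v) ⟨i, hi⟩ = ∑ j : {j // S j}, A i j * v j := rfl
      rw [this] at h1
      simp_rw [← mul_div_assoc]
      rw [← Finset.sum_div, h1, zero_div]
    refine Eq.trans ?_ h2
    simp only [Matrix.mulVec, dotProduct]
    rw [← Fintype.sum_subtype_add_sum_subtype S]
    have h3 : ∑ x : {x // ¬ S x}, A i x * (if hi : S x then v ⟨x, hi⟩ / v q' else 0) = 0 :=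
      Finset.sum_eq_zero fun x _ => by simp [x.2]
    rw [h3, add_zero]
    exact Finset.sum_congr rfl fun x _ => by simp [x.2]

/-- If `w` satisfies the stationarity equations of `exists_minimizer`, then
`yᵀAy ≥ (wᵀAw) y_q²` for `y` supported on `S`; replacing `wᵀAw` by a smaller constant makes the
inequality strict for `y ≠ 0`. -/
lemma form_sub_pos {n : ℕ} {A : Matrix (Fin n) (Fin n) ℝ} (hA : A.PosDef)
    {S : Fin n → Prop} {q : Fin n} {w : Fin n → ℝ} (hwq : w q = 1)
    (hwS : ∀ i, ¬ S i → w i = 0) (hAw : ∀ i, S i → i ≠ q → (A *ᵥ w) i = 0)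
    {γ : ℝ} (hγ : γ < w ⬝ᵥ (A *ᵥ w)) {y : Fin n → ℝ} (hyS : ∀ i, ¬ S i → y i = 0)
    (hy : y ≠ 0) : 0 < y ⬝ᵥ (A *ᵥ y) - γ * y q ^ 2 := by
  by_cases hc : y q = 0
  · have := hA.dotProduct_mulVec_pos hy
    simpa [hc] using this
  · have hAT : Aᵀ = A := by
      simpa [Matrix.IsHermitian, Matrix.conjTranspose_eq_transpose_of_trivial] using hA.isHermitian
    set r : Fin n → ℝ := y - y q • w with hr
    have hyr : y = r + y q • w := by simp [hr]
    have hrw : r ⬝ᵥ (A *ᵥ w) = 0 := by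
      refine Finset.sum_eq_zero fun i _ => ?_
      by_cases hi : S i
      · by_cases hiq : i = q
        · subst hiq
          simp [hr, hwq]
        · rw [hAw i hi hiq, mul_zero]
      · simp [hr, hyS i hi, hwS i hi]
    have hwr : w ⬝ᵥ (A *ᵥ r) = 0 := by
      rw [Matrix.dotProduct_mulVec, ← Matrix.mulVec_transpose, hAT, dotProduct_comm, hrw]
    have hrr : 0 ≤ r ⬝ᵥ (A *ᵥ r) := by
      simpa using hA.posSemidef.dotProduct_mulVec_nonneg r
    have hexp : y ⬝ᵥ (A *ᵥ y) = r ⬝ᵥ (A *ᵥ r) + y q ^ 2 * (w ⬝ᵥ (A *ᵥ w)) := by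
      conv_lhs => rw [hyr]
      simp only [Matrix.mulVec_add, Matrix.mulVec_smul, add_dotProduct, dotProduct_add,
        smul_dotProduct, dotProduct_smul, smul_eq_mul, hrw, hwr]
      ring
    have : 0 < y q ^ 2 := by positivity
    nlinarith

/-- The diagonal 0/1 matrix of the coordinate projection onto the indices satisfying `S`. -/
noncomputable def coordProj {n : ℕ} (S : Fin n → Prop) [DecidablePred S] :
    Matrix (Fin n) (Fin n) ℝ :=
  Matrix.diagonal fun i => if S i then 1 else 0

/-- The linear parametrisation `v ↦ v_q u + ∑_{i ∈ S, i ≠ q} v_i e_i` of a test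
space, for `u` with `u_q = 1` and `u_i = 0` at the other `i ∈ S` (on `S` the values of `u` are not
used). -/
noncomputable def testMap {n : ℕ} (S : Fin n → Prop) [DecidablePred S] {q : Fin n} (hq : S q)
    (u : Fin n → ℝ) : ({i // S i} → ℝ) →ₗ[ℝ] (Fin n → ℝ) where
  toFun v i := if hi : S i then v ⟨i, hi⟩ else v ⟨q, hq⟩ * u i
  map_add' v v' := by
    funext i
    by_cases hi : S i <;> simp [hi, add_mul]
  map_smul' c v := by
    funext i
    by_cases hi : S i <;> simp [hi, mul_assoc]

lemma diagonal_conj_form {n : ℕ} (d : Fin n → ℝ) (A : Matrix (Fin n) (Fin n) ℝ)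
    (z : Fin n → ℝ) :
    z ⬝ᵥ ((Matrix.diagonal d * A * Matrix.diagonal d) *ᵥ z) =
      (Matrix.diagonal d *ᵥ z) ⬝ᵥ (A *ᵥ (Matrix.diagonal d *ᵥ z)) := by
  rw [← Matrix.mulVec_mulVec, ← Matrix.mulVec_mulVec, Matrix.dotProduct_mulVec,
    ← Matrix.mulVec_transpose, Matrix.diagonal_transpose]

/-- If the blocks `S` and `S'` meet only in `q`, the difference of the form `A` on `S` and the form
`C` on `S'` is positive definite on the test space: there it equals `yᵀAy - (uᵀCu) y_q²` with `y`
supported on `S`. Applied to `(B, τH)` and, with the roles exchanged, to `(τH, B)`. -/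
lemma limit_form_pos {n : ℕ} {A C : Matrix (Fin n) (Fin n) ℝ} (hA : A.PosDef)
    (S S' : Fin n → Prop) [DecidablePred S] [DecidablePred S'] {q : Fin n} (hq : S q)
    (hSS' : ∀ i, S i → S' i → i = q) (hq' : S' q)
    {w u : Fin n → ℝ} (hwq : w q = 1)
    (hwS : ∀ i, ¬ S i → w i = 0) (hAw : ∀ i, S i → i ≠ q → (A *ᵥ w) i = 0)
    (huq : u q = 1) (huS : ∀ i, ¬ S' i → u i = 0)
    (hlt : u ⬝ᵥ (C *ᵥ u) < w ⬝ᵥ (A *ᵥ w)) (v : {i // S i} → ℝ) (hv : v ≠ 0) :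
    0 < testMap S hq u v ⬝ᵥ
      ((coordProj S * A * coordProj S - coordProj S' * C * coordProj S') *ᵥ
        testMap S hq u v) := by
  set z := testMap S hq u v with hz
  set y : Fin n → ℝ := coordProj S *ᵥ z with hy
  have hyi : ∀ i, y i = if hi : S i then v ⟨i, hi⟩ else 0 := by
    intro i
    by_cases hi : S i <;> simp [hy, hz, coordProj, testMap, Matrix.mulVec_diagonal, hi]
  have hx : coordProj S' *ᵥ z = y q • u := by
    funext i
    by_cases hi' : S' i
    · by_cases hi : S i
      · obtain rfl := hSS' i hi hi'
        simp [hyi, hz, coordProj, testMap, Matrix.mulVec_diagonal, hi, hi', huq]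
      · simp [hyi, hz, coordProj, testMap, Matrix.mulVec_diagonal, hi, hi', hq]
    · simp [coordProj, Matrix.mulVec_diagonal, hi', huS i hi']
  have hy0 : y ≠ 0 := by
    intro h0
    refine hv (funext fun i => ?_)
    have := congrFun h0 i.1
    rw [hyi, dif_pos i.2] at this
    exact this
  have := form_sub_pos hA hwq hwS hAw hlt (y := y) (fun i hi => by simp [hyi, hi]) hy0
  rw [Matrix.sub_mulVec, dotProduct_sub]
  unfold coordProj at hx hy ⊢
  rw [diagonal_conj_form, diagonal_conj_form, hx, ← hy]
  simp only [Matrix.mulVec_smul, smul_dotProduct, dotProduct_smul, smul_eq_mul]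
  nlinarith

/-! ### Rescaling as `a → ∞` -/

lemma tendsto_rpow_indicator {x : ℝ} (hx : x ≤ 0) (p : Prop) [Decidable p] (hp : p ↔ x = 0) :
    Tendsto (fun a : ℝ => a ^ x) atTop (𝓝 (if p then 1 else 0)) := by
  by_cases h : x = 0
  · rw [if_pos (hp.2 h)]
    simp [h]
  · rw [if_neg (fun hh => h (hp.1 hh))]
    have := tendsto_rpow_neg_atTop (y := -x) (by
      have := lt_of_le_of_ne hx h
      linarith)
    simpa using this

/-- The matrix `diag(a^{e_i - max(h_i, h_q)})`. The exponents `e = 0`, `e = h` and `e = h_q` give the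
rescaling `E`, the product `D_a E` and the product `a^{h_q} E`. -/
noncomputable def scaleMat {n : ℕ} (h e : Fin n → ℝ) (q : Fin n) (a : ℝ) :
    Matrix (Fin n) (Fin n) ℝ :=
  Matrix.diagonal fun i => a ^ (e i - max (h i) (h q))

lemma tendsto_scaleMat {n : ℕ} (h e : Fin n → ℝ) (q : Fin n) (S : Fin n → Prop)
    [DecidablePred S] (he : ∀ i, e i ≤ max (h i) (h q))
    (hS : ∀ i, S i ↔ e i = max (h i) (h q)) :
    Tendsto (scaleMat h e q) atTop (𝓝 (coordProj S)) := by
  have : Tendsto (fun a : ℝ => fun i => a ^ (e i - max (h i) (h q))) atTop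
      (𝓝 fun i => if S i then (1 : ℝ) else 0) := by
    rw [tendsto_pi_nhds]
    intro i
    exact tendsto_rpow_indicator (by have := he i; linarith) _ (by rw [hS, sub_eq_zero])
  exact ((Continuous.matrix_diagonal continuous_id).tendsto _).comp this

lemma scaleMat_eq {n : ℕ} (h e : Fin n → ℝ) (q : Fin n) {a : ℝ} (ha : 0 < a) :
    scaleMat h e q a = Matrix.diagonal (fun i => a ^ e i) * scaleMat h 0 q a := by
  rw [scaleMat, scaleMat, Matrix.diagonal_mul_diagonal]
  congr 1
  funext i
  rw [← Real.rpow_add ha]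
  simp [sub_eq_add_neg]

/-- With `M = P D_a B D_a Pᵀ` and `X = Q E`, the rescaled form is `XᵀMX - τ a^{2h_q} XᵀX`. -/
lemma scaled_form {n : ℕ} (h : Fin n → ℝ) {P Q : Matrix (Fin n) (Fin n) ℝ}
    (hPQ : Pᵀ * Q = 1) (B : Matrix (Fin n) (Fin n) ℝ) (q : Fin n) (τ : ℝ) {a : ℝ} (ha : 0 < a)
    (z : Fin n → ℝ) :
    z ⬝ᵥ ((scaleMat h h q a * B * scaleMat h h q a -
        scaleMat h (fun _ => h q) q a * (τ • (Qᵀ * Q)) * scaleMat h (fun _ => h q) q a) *ᵥ z) =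
      ((Q * scaleMat h 0 q a) *ᵥ z) ⬝ᵥ
          ((P * Dmat h a * B * Dmat h a * Pᵀ) *ᵥ ((Q * scaleMat h 0 q a) *ᵥ z)) -
        τ * a ^ (2 * h q) *
          (((Q * scaleMat h 0 q a) *ᵥ z) ⬝ᵥ ((Q * scaleMat h 0 q a) *ᵥ z)) := by
  set E := scaleMat h 0 q a with hE
  have hET : Eᵀ = E := by simp [hE, scaleMat]
  have hF : scaleMat h h q a = Dmat h a * E := scaleMat_eq h h q ha
  have hF' : scaleMat h (fun _ => h q) q a = a ^ h q • E := by
    rw [scaleMat_eq h _ q ha, ← Matrix.smul_one_eq_diagonal, Matrix.smul_mul, Matrix.one_mul]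
  have hcomm : Dmat h a * E = E * Dmat h a := by
    simp only [hE, scaleMat, Dmat, Matrix.diagonal_mul_diagonal, mul_comm]
  have hQP : Qᵀ * P = 1 := by
    rw [← Matrix.transpose_transpose P, ← Matrix.transpose_mul, hPQ, Matrix.transpose_one]
  set M := P * Dmat h a * B * Dmat h a * Pᵀ with hM
  have hXMX : (Q * E)ᵀ * M * (Q * E) = scaleMat h h q a * B * scaleMat h h q a := by
    calc (Q * E)ᵀ * M * (Q * E) =
        Eᵀ * (Qᵀ * P) * Dmat h a * B * Dmat h a * (Pᵀ * Q) * E := by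
          rw [hM, Matrix.transpose_mul]; simp only [Matrix.mul_assoc]
      _ = _ := by
          rw [hQP, hPQ, hET, Matrix.mul_one, Matrix.mul_one, hF]
          rw [← hcomm]
          simp only [Matrix.mul_assoc]
  have hXX : (τ * a ^ (2 * h q)) • ((Q * E)ᵀ * (Q * E)) =
      scaleMat h (fun _ => h q) q a * (τ • (Qᵀ * Q)) * scaleMat h (fun _ => h q) q a := by
    have h2 : a ^ (2 * h q) = a ^ h q * a ^ h q := by rw [← Real.rpow_add ha, two_mul]
    rw [hF', h2, Matrix.transpose_mul, hET]
    simp only [Matrix.smul_mul, Matrix.mul_smul, smul_smul, Matrix.mul_assoc]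
    congr 1
    ring
  have key : ∀ R : Matrix (Fin n) (Fin n) ℝ, z ⬝ᵥ (((Q * E)ᵀ * R * (Q * E)) *ᵥ z) =
      ((Q * E) *ᵥ z) ⬝ᵥ (R *ᵥ ((Q * E) *ᵥ z)) := by
    intro R
    rw [← Matrix.mulVec_mulVec, ← Matrix.mulVec_mulVec, Matrix.dotProduct_mulVec,
      ← Matrix.mulVec_transpose, Matrix.transpose_transpose]
  rw [← hXMX, ← hXX, Matrix.sub_mulVec, dotProduct_sub, key, Matrix.smul_mulVec,
    dotProduct_smul, smul_eq_mul]
  have := key 1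
  rw [Matrix.mul_one, Matrix.one_mulVec] at this
  rw [this]

/-- Both one-sided bounds on `λ_q / a^{2h_q}` for large `a`, with `β = wᵀBw` and `η = uᵀHu`,
`H = QᵀQ`. -/
lemma eventually_bounds {n : ℕ} {h : Fin n → ℝ} (hmono : StrictMono h)
    {P Q : Matrix (Fin n) (Fin n) ℝ} (hPQ : Pᵀ * Q = 1)
    {B : Matrix (Fin n) (Fin n) ℝ} (hB : B.PosDef) (hH : (Qᵀ * Q).PosDef) (q : Fin n)
    {w u : Fin n → ℝ} (hwq : w q = 1) (hwS : ∀ i, ¬ q ≤ i → w i = 0)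
    (hAw : ∀ i, q ≤ i → i ≠ q → (B *ᵥ w) i = 0)
    (huq : u q = 1) (huS : ∀ i, ¬ i ≤ q → u i = 0)
    (hHu : ∀ i, i ≤ q → i ≠ q → ((Qᵀ * Q) *ᵥ u) i = 0) (τ : ℝ) :
    (τ * (u ⬝ᵥ ((Qᵀ * Q) *ᵥ u)) < w ⬝ᵥ (B *ᵥ w) → ∀ᶠ a : ℝ in atTop,
      τ < eigR (P * Dmat h a * B * Dmat h a * Pᵀ) q / a ^ (2 * h q)) ∧
    (0 < τ → w ⬝ᵥ (B *ᵥ w) < τ * (u ⬝ᵥ ((Qᵀ * Q) *ᵥ u)) → ∀ᶠ a : ℝ in atTop,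
      eigR (P * Dmat h a * B * Dmat h a * Pᵀ) q / a ^ (2 * h q) < τ) := by
  have hBT : Bᵀ = B := by
    simpa [Matrix.IsHermitian, Matrix.conjTranspose_eq_transpose_of_trivial] using hB.isHermitian
  have hM : ∀ a, (P * Dmat h a * B * Dmat h a * Pᵀ).IsHermitian := by
    intro a
    rw [Matrix.IsHermitian, Matrix.conjTranspose_eq_transpose_of_trivial]
    simp only [Matrix.transpose_mul, Matrix.transpose_transpose, hBT, Dmat,
      Matrix.diagonal_transpose, Matrix.mul_assoc]
  have hF : Tendsto (scaleMat h h q) atTop (𝓝 (coordProj fun i => q ≤ i)) := by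
    refine tendsto_scaleMat h h q _ (fun i => le_max_left _ _) fun i => ?_
    rw [eq_comm, max_eq_left_iff, hmono.le_iff_le]
  have hF' : Tendsto (scaleMat h (fun _ => h q) q) atTop (𝓝 (coordProj fun i => i ≤ q)) := by
    refine tendsto_scaleMat h _ q _ (fun i => le_max_right _ _) fun i => ?_
    rw [eq_comm, max_eq_right_iff, hmono.le_iff_le]
  have hB' := (hF.mul_const B).mul hF
  have hH' := (hF'.mul_const (τ • (Qᵀ * Q))).mul hF'
  have hτ : u ⬝ᵥ ((τ • (Qᵀ * Q)) *ᵥ u) = τ * (u ⬝ᵥ ((Qᵀ * Q) *ᵥ u)) := by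
    rw [Matrix.smul_mulVec, dotProduct_smul, smul_eq_mul]
  constructor
  · intro hlt
    rw [← hτ] at hlt
    filter_upwards [eventually_form_pos _ (hB'.sub hH')
      (limit_form_pos hB (fun i => q ≤ i) (fun i => i ≤ q) (q := q) le_rfl
        (fun i h1 h2 => le_antisymm h2 h1) le_rfl hwq hwS hAw huq huS hlt),
      eventually_gt_atTop 0] with a ha ha0
    rw [lt_div_iff₀ (Real.rpow_pos_of_pos ha0 _)]
    refine lt_eigR (hM a) q _ ((Q * scaleMat h 0 q a).mulVecLin.comp
      (testMap (fun i => q ≤ i) le_rfl u)) fun v hv => ?_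
    have := ha v hv
    rw [scaled_form h hPQ B q τ ha0] at this
    simpa only [LinearMap.comp_apply, Matrix.mulVecLin_apply] using sub_pos.1 this
  · intro hτ0 hlt
    rw [← hτ] at hlt
    filter_upwards [eventually_form_pos _ (hH'.sub hB')
      (limit_form_pos (hH.smul hτ0) (fun i => i ≤ q) (fun i => q ≤ i) (q := q) le_rfl
        (fun i h1 h2 => le_antisymm h1 h2) le_rfl huq huS
        (fun i h1 h2 => by rw [Matrix.smul_mulVec, Pi.smul_apply, hHu i h1 h2, smul_zero])
        hwq hwS hlt),
      eventually_gt_atTop 0] with a ha ha0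
    rw [div_lt_iff₀ (Real.rpow_pos_of_pos ha0 _)]
    refine eigR_lt (hM a) q _ ((Q * scaleMat h 0 q a).mulVecLin.comp
      (testMap (fun i => i ≤ q) le_rfl w)) fun v hv => ?_
    have := ha v hv
    rw [← neg_sub, Matrix.neg_mulVec, dotProduct_neg, scaled_form h hPQ B q τ ha0,
      neg_sub] at this
    simpa only [LinearMap.comp_apply, Matrix.mulVecLin_apply] using sub_pos.1 this

/-! ### The limit -/

lemma Dmat_mul {n : ℕ} (h : Fin n → ℝ) {a c : ℝ} (ha : 0 < a) (hc : 0 < c) :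
    Dmat h a * Dmat h c = Dmat h (a * c) := by
  rw [Dmat, Dmat, Dmat, Matrix.diagonal_mul_diagonal]
  congr 1
  funext i
  rw [Real.mul_rpow ha.le hc.le]

/-- Proposition 3.1(ii): with `0 < h_1 < ⋯ < h_n < 1` and `P` invertible with
unit columns, for every symmetric positive definite `B` and every `q`, the limit
`ξ_q(B) := lim_{a→∞} λ_q(P D_a B D_a Pᵀ)/a^{2h_q}` exists, is strictly positive, and satisfies
`ξ_q(D_c B D_c) = c^{2h_q} ξ_q(B)` for all `c > 0`; moreover `ξ_n(B) = B_{nn}`. -/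
theorem stmt4 {n : ℕ}
    (h : Fin n → ℝ) (hmono : StrictMono h)
    (h0 : ∀ i, 0 < h i) (h1 : ∀ i, h i < 1)
    (P : Matrix (Fin n) (Fin n) ℝ) (hP : IsUnit P)
    (hPcol : ∀ j, ∑ i, P i j ^ 2 = 1) :
    ∀ B : Matrix (Fin n) (Fin n) ℝ, B.PosDef → ∀ q : Fin n,
      ∃ ξ : ℝ, 0 < ξ ∧
        Tendsto (fun a : ℝ => eigR (P * Dmat h a * B * Dmat h a * Pᵀ) q / a ^ (2 * h q))
          atTop (𝓝 ξ) ∧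
        (∀ c : ℝ, 0 < c →
          Tendsto
            (fun a : ℝ =>
              eigR (P * Dmat h a * (Dmat h c * B * Dmat h c) * Dmat h a * Pᵀ) q /
                a ^ (2 * h q))
            atTop (𝓝 (c ^ (2 * h q) * ξ))) ∧
        ((q : ℕ) = n - 1 → ξ = B q q) := by
  have hPT : IsUnit Pᵀ.det := by
    rw [Matrix.det_transpose]
    exact (Matrix.isUnit_iff_isUnit_det P).1 hP
  obtain ⟨Q, hPQ⟩ : ∃ Q, Pᵀ * Q = 1 := ⟨_, Matrix.mul_nonsing_inv _ hPT⟩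
  have hH : (Qᵀ * Q).PosDef := by
    rw [← Matrix.conjTranspose_eq_transpose_of_trivial]
    refine Matrix.PosDef.conjTranspose_mul_self Q (Matrix.mulVec_injective_of_isUnit ?_)
    rw [Matrix.isUnit_iff_isUnit_det]
    exact Matrix.isUnit_det_of_left_inverse hPQ
  intro B hB q
  obtain ⟨w, hwq, hwS, hBw⟩ := exists_minimizer hB (fun i => q ≤ i) (le_refl q)
  obtain ⟨u, huq, huS, hHu⟩ := exists_minimizer hH (fun i => i ≤ q) (le_refl q)
  have hbd := eventually_bounds hmono hPQ hB hH q hwq hwS hBw huq huS hHu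
  have hw0 : w ≠ 0 := by rintro rfl; simp at hwq
  have hu0 : u ≠ 0 := by rintro rfl; simp at huq
  have hβ : 0 < w ⬝ᵥ (B *ᵥ w) := by simpa using hB.dotProduct_mulVec_pos hw0
  have hη : 0 < u ⬝ᵥ ((Qᵀ * Q) *ᵥ u) := by simpa using hH.dotProduct_mulVec_pos hu0
  set β := w ⬝ᵥ (B *ᵥ w) with hβdef
  set η := u ⬝ᵥ ((Qᵀ * Q) *ᵥ u) with hηdef
  have hξ : 0 < β / η := div_pos hβ hη
  have hlim : Tendsto (fun a : ℝ => eigR (P * Dmat h a * B * Dmat h a * Pᵀ) q / a ^ (2 * h q))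
      atTop (𝓝 (β / η)) :=
    tendsto_order.2 ⟨fun τ hτ => (hbd τ).1 ((lt_div_iff₀ hη).1 hτ),
      fun τ hτ => (hbd τ).2 (hξ.trans hτ) ((div_lt_iff₀ hη).1 hτ)⟩
  refine ⟨β / η, hξ, hlim, fun c hc => ?_, fun hqn => ?_⟩
  · refine ((hlim.comp (tendsto_id.atTop_mul_const hc)).const_mul (c ^ (2 * h q))).congr' ?_
    filter_upwards [eventually_gt_atTop 0] with a ha
    have hc' : c ^ (2 * h q) ≠ 0 := (Real.rpow_pos_of_pos hc _).ne'
    have hm : P * Dmat h a * (Dmat h c * B * Dmat h c) * Dmat h a * Pᵀ =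
        P * Dmat h (a * c) * B * Dmat h (a * c) * Pᵀ := by
      have hca : Dmat h c * Dmat h a = Dmat h (a * c) := by rw [Dmat_mul h hc ha, mul_comm]
      calc _ = P * (Dmat h a * Dmat h c) * B * (Dmat h c * Dmat h a) * Pᵀ := by
            simp only [Matrix.mul_assoc]
        _ = _ := by rw [hca, Dmat_mul h ha hc]
    simp only [Function.comp_apply, id]
    rw [hm, Real.mul_rpow ha.le hc.le]
    field_simp
  · have hmax : ∀ i, i ≤ q := fun i => by
      rw [Fin.le_def]
      omega
    have hw : w = Pi.single q 1 := by
      funext i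
      by_cases hi : i = q
      · subst hi
        simp [hwq]
      · rw [Pi.single_eq_of_ne hi]
        exact hwS i fun h' => hi (le_antisymm (hmax i) h')
    have hβ' : β = B q q := by
      rw [hβdef, hw]
      simp
    have hHu' : (Qᵀ * Q) *ᵥ u = Pi.single q η := by
      have h1 : (Qᵀ * Q) *ᵥ u = Pi.single q (((Qᵀ * Q) *ᵥ u) q) := by
        funext i
        by_cases hi : i = q
        · subst hi
          simp
        · rw [Pi.single_eq_of_ne hi]
          exact hHu i (hmax i) hi
      have h2 : η = ((Qᵀ * Q) *ᵥ u) q := by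
        rw [hηdef, h1]
        simp [huq]
      rw [h2]
      exact h1
    have hGH : (Pᵀ * P) * (Qᵀ * Q) = 1 := by
      have : P * Qᵀ = 1 := by
        have hQP : Q * Pᵀ = 1 := mul_eq_one_comm.1 hPQ
        rw [← Matrix.transpose_transpose P, ← Matrix.transpose_mul, hQP, Matrix.transpose_one]
      rw [Matrix.mul_assoc, ← Matrix.mul_assoc P, this, Matrix.one_mul, hPQ]
    have hη1 : η = 1 := by
      have h3 : u q = ((Pᵀ * P) *ᵥ ((Qᵀ * Q) *ᵥ u)) q := by
        rw [Matrix.mulVec_mulVec, hGH, Matrix.one_mulVec]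
      have h4 : (Pᵀ * P) q q = 1 := by
        rw [← hPcol q]
        simp [Matrix.mul_apply, sq]
      rw [hHu', huq] at h3
      simpa [h4] using h3.symm
    rw [hη1, hβ', div_one]
end

section
/- Let 0 < h_1 < … < h_n < 1 be reals, let P be an invertible real n×n matrix whose columns have unit Euclidean norm, and let B be a real symmetric positive definite n×n matrix. For q ∈ {1, …, n} let ξ_q(B) := lim_{a→∞} λ_q(P D_a B D_a Pᵀ)/a^{2h_q}, which exists and is positive. Then there exist a constant C > 0 and a_0 > 1 such that for all a ≥ a_0 and all q ∈ {1, …, n}: |λ_q(P D_a B D_a Pᵀ)/a^{2h_q} − ξ_q(B)| ≤ C · a^{−γ}, where γ := min_{1 ≤ q_1 < q_2 ≤ n} (h_{q_2} − h_{q_1}). -/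
/-!
Write `λ_q` for the eigenvalues of `M(a) = P D_a B D_a Pᵀ` and `r_q = λ_q / a^{2 h_q}`.
With `Q = (Pᵀ P)⁻¹`, `det (t + M(a)) = (det P)² det (t Q + D_a B D_a)`. Expanding both sides in
powers of `t` (the right one by the Leibniz formula) identifies the elementary symmetric functions
of the `λ_q` with explicit finite sums of powers of `a`:
`∑_{|S| = k} ∏_{i ∈ S} λ_i = ∑_{|S| = k} ∑_σ c(S, σ) a^{∑_{i ∈ S} h_i + ∑_{i ∈ σ(S)} h_i}`
(`sum_prod_eig_eq`).

Let `T` be an up-closed set of `k` indices. Any other `k`-element set `S` has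
`∑_S h ≤ ∑_T h - γ` (`sum_le_of_isUpperSet`). After division by `a^{2 ∑_T h}`, each term on the right
is therefore constant or `O(a^{-γ})`, while on the left every term with `S ≠ T` is
`O(a^{-2γ})` because the `r_q` converge. Hence `∏_{q ∈ T} r_q` is a constant plus `O(a^{-γ})`, and
the constant must be `∏_{q ∈ T} ξ_q` (`prod_approx`). Applying this to `T = {q, q+1, …}` and
`T = {q+1, …}` and taking the quotient, which is legitimate as the `ξ_q` are nonzero, gives the
claim for `r_q`.
-/

open Matrix Filter Topology

open Asymptotics

/-- Among index sets of a given size, an up-closed one maximizes `∑ h`, and the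
maximum is separated from the other values by the minimal gap `γ`. -/
lemma sum_le_of_isUpperSet {n : ℕ} {h : Fin n → ℝ} {γ : ℝ} (hγ0 : 0 < γ)
    (hgap : ∀ i j : Fin n, i < j → γ ≤ h j - h i) {S T : Finset (Fin n)}
    (hT : IsUpperSet (T : Set (Fin n))) (hc : S.card = T.card) (hne : S ≠ T) :
    ∑ i ∈ S, h i ≤ ∑ i ∈ T, h i - γ := by
  classical
  have hcard : (S \ T).card = (T \ S).card := Finset.card_sdiff_comm hc
  have hTS : (T \ S).Nonempty := by
    rw [Finset.sdiff_nonempty]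
    intro hsub
    exact hne (Finset.eq_of_subset_of_card_le hsub hc.le).symm
  obtain ⟨t, ht, htmin⟩ := Finset.exists_min_image (T \ S) h hTS
  have h1 : ∑ i ∈ S \ T, h i ≤ (S \ T).card • (h t - γ) := by
    refine Finset.sum_le_card_nsmul _ _ _ fun s hs => ?_
    have hst : s < t := by
      by_contra hcon
      exact (Finset.mem_sdiff.1 hs).2 (hT (not_lt.1 hcon) (Finset.mem_sdiff.1 ht).1)
    linarith [hgap s t hst]
  have h2 : (T \ S).card • h t ≤ ∑ i ∈ T \ S, h i :=
    Finset.card_nsmul_le_sum _ _ _ htmin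
  have h3 : (1 : ℝ) ≤ (T \ S).card := by exact_mod_cast hTS.card_pos
  rw [hcard] at h1
  simp only [nsmul_eq_mul] at h1 h2
  have h4 := Finset.sum_inter_add_sum_sdiff S T h
  have h5 := Finset.sum_inter_add_sum_sdiff T S h
  rw [Finset.inter_comm] at h5
  nlinarith

lemma det_add_eq_prod_eigR {n : ℕ} (M : Matrix (Fin n) (Fin n) ℝ) (hM : M.IsHermitian) (t : ℝ) :
    (t • (1 : Matrix (Fin n) (Fin n) ℝ) + M).det = ∏ q, (t + eigR M q) := by
  have e1 : ∏ q, (t + eigR M q) = ∏ q, (t + hM.eigenvalues q) := by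
    simp only [eigR, dif_pos hM, Function.comp]
    exact Equiv.prod_comp (Tuple.sort hM.eigenvalues) fun q => t + hM.eigenvalues q
  have e2 := congrArg (Polynomial.eval (-t)) hM.charpoly_eq
  rw [Matrix.eval_charpoly, Polynomial.eval_prod] at e2
  have e3 : Matrix.scalar (Fin n) (-t) - M = -(t • (1 : Matrix (Fin n) (Fin n) ℝ) + M) := by
    rw [Matrix.scalar_apply, ← Matrix.smul_one_eq_diagonal, neg_smul]; abel
  have e4 : ∀ i, Polynomial.eval (-t) (Polynomial.X - Polynomial.C
      ((hM.eigenvalues i : ℝ))) = -(t + hM.eigenvalues i) := by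
    intro i; simp; ring
  rw [e3, Matrix.det_neg] at e2
  simp only [RCLike.ofReal_real_eq_id, id, e4] at e2
  rw [Finset.prod_neg] at e2
  rw [e1]
  simpa using e2

/-- Two polynomial functions, written as sums over subsets graded by cardinality, have the same
coefficients. -/
lemma sum_powersetCard_eq_of_forall {n : ℕ} (u v : Finset (Fin n) → ℝ)
    (huv : ∀ t : ℝ, ∑ S : Finset (Fin n), u S * t ^ S.card
      = ∑ S : Finset (Fin n), v S * t ^ S.card) (k : ℕ) :
    ∑ S with S.card = k, u S = ∑ S with S.card = k, v S := by
  have key : ∑ S : Finset (Fin n), Polynomial.monomial S.card (u S)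
      = ∑ S : Finset (Fin n), Polynomial.monomial S.card (v S) := by
    refine Polynomial.funext fun t => ?_
    simpa [Polynomial.eval_finsetSum] using huv t
  have := congrArg (fun p => Polynomial.coeff p k) key
  simp only [Polynomial.finsetSum_coeff, Polynomial.coeff_monomial] at this
  rwa [Finset.sum_filter, Finset.sum_filter]

/-- The elementary symmetric functions of the eigenvalues are sums of powers of `a`, whose exponents
are sums of `h` over two index sets `S` and `σ(S)` of the prescribed size. -/
lemma sum_prod_eig_eq {n : ℕ} (h : Fin n → ℝ) (P B : Matrix (Fin n) (Fin n) ℝ) (hP : IsUnit P)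
    (hB : B.IsHermitian) :
    ∃ c : Finset (Fin n) → Equiv.Perm (Fin n) → ℝ, ∀ a : ℝ, 0 < a → ∀ k : ℕ,
      ∑ S with S.card = k, ∏ q ∈ S, eigR (P * Dmat h a * B * Dmat h a * Pᵀ) q
      = ∑ S with S.card = k, ∑ σ, c S σ * a ^ (∑ i ∈ S, h i + ∑ i ∈ S, h (σ i)) := by
  classical
  set Q := P⁻¹ * (Pᵀ)⁻¹ with hQ
  refine ⟨fun S σ => P.det ^ 2 * ((Equiv.Perm.sign σ : ℤ) : ℝ) * (∏ i ∈ S, B (σ i) i) *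
    ∏ i ∈ Sᶜ, Q (σ i) i, fun a ha k => ?_⟩
  set M := P * Dmat h a * B * Dmat h a * Pᵀ with hM
  have hDT : (Dmat h a)ᵀ = Dmat h a := by simp [Dmat]
  have hBT : Bᵀ = B := by simpa [Matrix.IsHermitian] using hB
  have hMH : M.IsHermitian := by
    simp only [Matrix.IsHermitian, hM, Matrix.conjTranspose_eq_transpose_of_trivial,
      Matrix.transpose_mul, Matrix.transpose_transpose, hDT, hBT, Matrix.mul_assoc]
  have hdet : IsUnit P.det := (Matrix.isUnit_iff_isUnit_det P).1 hP
  have hdetT : IsUnit Pᵀ.det := by rwa [Matrix.det_transpose]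
  have hfac : ∀ t : ℝ, t • (1 : Matrix (Fin n) (Fin n) ℝ) + M
      = P * (t • Q + Dmat h a * B * Dmat h a) * Pᵀ := by
    intro t
    have : P * Q * Pᵀ = 1 := by
      rw [hQ, ← Matrix.mul_assoc, Matrix.mul_nonsing_inv _ hdet, Matrix.one_mul,
        Matrix.nonsing_inv_mul _ hdetT]
    rw [Matrix.mul_add, Matrix.add_mul, Matrix.mul_smul, Matrix.smul_mul, this, hM]
    simp only [Matrix.mul_assoc]
  -- Replacing each set by its complement makes the powers of `t` match cardinalities.
  have hmain := sum_powersetCard_eq_of_forall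
    (fun S => ∏ q ∈ Sᶜ, eigR M q)
    (fun S => ∑ σ : Equiv.Perm (Fin n), (P.det ^ 2 * ((Equiv.Perm.sign σ : ℤ) : ℝ) *
      (∏ i ∈ Sᶜ, B (σ i) i) * ∏ i ∈ S, Q (σ i) i) *
        a ^ (∑ i ∈ Sᶜ, h i + ∑ i ∈ Sᶜ, h (σ i))) (fun t => by
    have e1 := det_add_eq_prod_eigR M hMH t
    rw [Finset.prod_add] at e1
    simp only [Finset.powerset_univ, Finset.prod_const, ← Finset.compl_eq_univ_sdiff] at e1
    have e2 : (t • (1 : Matrix (Fin n) (Fin n) ℝ) + M).det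
      = P.det ^ 2 * (t • Q + Dmat h a * B * Dmat h a).det := by
      rw [hfac, Matrix.det_mul, Matrix.det_mul, Matrix.det_transpose]; ring
    have e3 : ∀ i j, (t • Q + Dmat h a * B * Dmat h a) i j
        = t * Q i j + B i j * a ^ (h j + h i) := by
      intro i j
      simp only [Matrix.add_apply, Matrix.smul_apply, smul_eq_mul, Dmat, Matrix.mul_diagonal,
        Matrix.diagonal_mul, Real.rpow_add ha]
      ring
    rw [e1, Matrix.det_apply' (t • Q + _)] at e2
    simp only [e3, Finset.prod_add, Finset.powerset_univ, ← Finset.compl_eq_univ_sdiff,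
      Finset.prod_mul_distrib, Finset.prod_const] at e2
    calc _ = ∑ S : Finset (Fin n), t ^ S.card * ∏ q ∈ Sᶜ, eigR M q :=
          Finset.sum_congr rfl fun S _ => mul_comm _ _
      _ = _ := e2
      _ = _ := by
        simp only [Finset.mul_sum, Finset.sum_mul]
        rw [Finset.sum_comm]
        refine Finset.sum_congr rfl fun S _ => Finset.sum_congr rfl fun σ _ => ?_
        rw [← Real.rpow_sum_of_pos ha, Finset.sum_add_distrib]
        ring)
  have hcompl : ∀ F : Finset (Fin n) → ℝ, ∀ k ≤ n,
      ∑ S with S.card = n - k, F Sᶜ = ∑ S with S.card = k, F S := by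
    intro F k hk
    refine Finset.sum_bij' (fun S _ => Sᶜ) (fun S _ => Sᶜ) ?_ ?_ ?_ ?_ ?_
    · intro S hS
      simp only [Finset.mem_filter, Finset.mem_univ, true_and, Finset.card_compl,
        Fintype.card_fin] at hS ⊢
      omega
    · intro S hS
      simp only [Finset.mem_filter, Finset.mem_univ, true_and, Finset.card_compl,
        Fintype.card_fin] at hS ⊢
      omega
    all_goals simp
  by_cases hk : k ≤ n
  · have hL := hcompl (fun S => ∏ q ∈ S, eigR M q) k hk
    have hR := hcompl (fun S => ∑ σ : Equiv.Perm (Fin n), (P.det ^ 2 *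
      ((Equiv.Perm.sign σ : ℤ) : ℝ) * (∏ i ∈ S, B (σ i) i) * ∏ i ∈ Sᶜ, Q (σ i) i) *
        a ^ (∑ i ∈ S, h i + ∑ i ∈ S, h (σ i))) k hk
    simp only [compl_compl] at hR
    exact hL.symm.trans ((hmain (n - k)).trans hR)
  · have hempty : (Finset.univ.filter fun S : Finset (Fin n) => S.card = k) = ∅ := by
      refine Finset.filter_eq_empty_iff.2 fun S _ hS => hk ?_
      simpa [hS] using Finset.card_le_univ S
    simp [hempty]

lemma isBigO_rpow_of_le {x y : ℝ} (hxy : x ≤ y) :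
    (fun a : ℝ => a ^ x) =O[atTop] fun a : ℝ => a ^ y := by
  refine IsBigO.of_bound 1 ?_
  filter_upwards [eventually_ge_atTop 1] with a ha
  have ha0 : 0 < a := one_pos.trans_le ha
  rw [one_mul, Real.norm_of_nonneg (by positivity), Real.norm_of_nonneg (by positivity)]
  exact Real.rpow_le_rpow_of_exponent_le ha hxy

/-- Products of normalized eigenvalues over an up-closed index set converge at rate `a^{-γ}`. -/
lemma prod_approx {n : ℕ} (h : Fin n → ℝ) (P B : Matrix (Fin n) (Fin n) ℝ) (hP : IsUnit P)
    (hB : B.IsHermitian) (ξ : Fin n → ℝ)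
    (hξ : ∀ q : Fin n,
      Tendsto (fun a : ℝ => eigR (P * Dmat h a * B * Dmat h a * Pᵀ) q / a ^ (2 * h q))
        atTop (𝓝 (ξ q)))
    {γ : ℝ} (hγ0 : 0 < γ) (hgap : ∀ i j : Fin n, i < j → γ ≤ h j - h i)
    (T : Finset (Fin n)) (hT : IsUpperSet (T : Set (Fin n))) :
    (fun a : ℝ => ∏ q ∈ T, (eigR (P * Dmat h a * B * Dmat h a * Pᵀ) q / a ^ (2 * h q))
      - ∏ q ∈ T, ξ q) =O[atTop] fun a : ℝ => a ^ (-γ) := by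
  classical
  obtain ⟨c, hc⟩ := sum_prod_eig_eq h P B hP hB
  set r : Fin n → ℝ → ℝ :=
    fun q a => eigR (P * Dmat h a * B * Dmat h a * Pᵀ) q / a ^ (2 * h q) with hr
  set H := ∑ i ∈ T, h i with hH
  have hsumle : ∀ S : Finset (Fin n), S.card = T.card → S ≠ T → ∑ i ∈ S, h i ≤ H - γ :=
    fun S h1 h2 => sum_le_of_isUpperSet hγ0 hgap hT h1 h2
  have hterm : ∀ (S : Finset (Fin n)) (σ : Equiv.Perm (Fin n)), S.card = T.card → ∃ d : ℝ,
      (fun a : ℝ => c S σ * a ^ (∑ i ∈ S, h i + ∑ i ∈ S, h (σ i) - 2 * H) - d)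
        =O[atTop] fun a : ℝ => a ^ (-γ) := by
    intro S σ hS
    set S' := S.map σ.toEmbedding with hS'
    have hs' : ∑ i ∈ S, h (σ i) = ∑ i ∈ S', h i := by simp [hS']
    have hcS' : S'.card = T.card := by simp [hS', hS]
    have hlow : ∀ S : Finset (Fin n), S.card = T.card → ∑ i ∈ S, h i ≤ H := by
      intro S hS
      by_cases hST : S = T
      · rw [hST]
      · linarith [hsumle S hS hST]
    rw [hs']
    by_cases hST : S = T ∧ S' = T
    · refine ⟨c S σ, ?_⟩
      rw [hST.2, hST.1, ← hH, show H + H - 2 * H = 0 by ring]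
      simpa using isBigO_zero _ _
    · refine ⟨0, ?_⟩
      simp only [sub_zero]
      refine (isBigO_rpow_of_le ?_).const_mul_left _
      have := hlow S hS
      have := hlow S' hcS'
      rcases not_and_or.1 hST with h1 | h1
      · linarith [hsumle S hS h1]
      · linarith [hsumle S' hcS' h1]
  have hterm' : ∀ (S : Finset (Fin n)) (σ : Equiv.Perm (Fin n)), ∃ d : ℝ, S.card = T.card →
      (fun a : ℝ => c S σ * a ^ (∑ i ∈ S, h i + ∑ i ∈ S, h (σ i) - 2 * H) - d)
        =O[atTop] fun a : ℝ => a ^ (-γ) := by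
    intro S σ
    by_cases hS : S.card = T.card
    · obtain ⟨d, hd⟩ := hterm S σ hS
      exact ⟨d, fun _ => hd⟩
    · exact ⟨0, fun h => absurd h hS⟩
  choose d hd using hterm'
  set D := ∑ S with S.card = T.card, ∑ σ, d S σ with hD
  have hbig1 : (fun a : ℝ => ∑ S with S.card = T.card, ∑ σ,
      (c S σ * a ^ (∑ i ∈ S, h i + ∑ i ∈ S, h (σ i) - 2 * H) - d S σ))
        =O[atTop] fun a : ℝ => a ^ (-γ) := by
    refine IsBigO.fun_sum fun S hS => IsBigO.fun_sum fun σ _ => hd S σ ?_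
    simpa using hS
  have hbig2 : (fun a : ℝ => ∑ S ∈ (Finset.univ.filter fun S : Finset (Fin n) =>
      S.card = T.card).erase T, (∏ q ∈ S, r q a) * a ^ (2 * ∑ i ∈ S, h i - 2 * H))
        =O[atTop] fun a : ℝ => a ^ (-γ) := by
    refine IsBigO.fun_sum fun S hS => ?_
    simp only [Finset.mem_erase, Finset.mem_filter, Finset.mem_univ, true_and] at hS
    have h1 : (fun a : ℝ => ∏ q ∈ S, r q a) =O[atTop] fun _ : ℝ => (1 : ℝ) :=
      (tendsto_finsetProd S fun q _ => hξ q).isBigO_one ℝ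
    have h2 : (fun a : ℝ => a ^ (2 * ∑ i ∈ S, h i - 2 * H)) =O[atTop] fun a : ℝ => a ^ (-γ) :=
      isBigO_rpow_of_le (by linarith [hsumle S hS.2 hS.1])
    simpa using h1.mul h2
  have hconst : (fun a : ℝ => ∏ q ∈ T, r q a - D) =O[atTop] fun a : ℝ => a ^ (-γ) := by
    refine (hbig1.sub hbig2).congr' ?_ EventuallyEq.rfl
    filter_upwards [eventually_gt_atTop 0] with a ha
    have hpos : (0 : ℝ) < a ^ (2 * H) := Real.rpow_pos_of_pos ha _
    have hprod : ∀ S : Finset (Fin n), (∏ q ∈ S, r q a) * a ^ (2 * ∑ i ∈ S, h i - 2 * H)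
        = (∏ q ∈ S, eigR (P * Dmat h a * B * Dmat h a * Pᵀ) q) / a ^ (2 * H) := by
      intro S
      have hposS : (0 : ℝ) < a ^ (2 * ∑ i ∈ S, h i) := Real.rpow_pos_of_pos ha _
      simp only [hr]
      rw [Finset.prod_div_distrib, ← Real.rpow_sum_of_pos ha, ← Finset.mul_sum,
        Real.rpow_sub ha]
      field_simp
    have hTterm : (∏ q ∈ T, r q a) = (∏ q ∈ T, r q a) * a ^ (2 * ∑ i ∈ T, h i - 2 * H) := by
      simp [hH]
    have hk := hc a ha T.card
    have hsplit := Finset.add_sum_erase (Finset.univ.filter fun S : Finset (Fin n) =>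
      S.card = T.card) (fun S => (∏ q ∈ S, r q a) * a ^ (2 * ∑ i ∈ S, h i - 2 * H))
      (a := T) (by simp)
    rw [← hTterm] at hsplit
    simp only [Finset.sum_sub_distrib]
    have hleft : ∑ S with S.card = T.card, (∏ q ∈ S, r q a) * a ^ (2 * ∑ i ∈ S, h i - 2 * H)
        = ∑ S with S.card = T.card, ∑ σ,
          c S σ * a ^ (∑ i ∈ S, h i + ∑ i ∈ S, h (σ i) - 2 * H) := by
      simp only [hprod]
      rw [← Finset.sum_div, hk, Finset.sum_div]
      refine Finset.sum_congr rfl fun S _ => ?_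
      rw [Finset.sum_div]
      refine Finset.sum_congr rfl fun σ _ => ?_
      rw [Real.rpow_sub ha]
      ring
    rw [← hleft, ← hD]
    linarith
  -- The constant is identified by uniqueness of limits.
  have hlim : Tendsto (fun a : ℝ => ∏ q ∈ T, r q a) atTop (𝓝 (∏ q ∈ T, ξ q)) :=
    tendsto_finsetProd T fun q _ => hξ q
  have hlim0 : Tendsto (fun a : ℝ => ∏ q ∈ T, r q a - D) atTop (𝓝 0) :=
    hconst.trans_tendsto (tendsto_rpow_neg_atTop hγ0)
  have heq : D = ∏ q ∈ T, ξ q := by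
    have := tendsto_nhds_unique hlim0 (hlim.sub_const D)
    linarith
  rwa [← heq]


/-- Lemma A.3: with `0 < h_1 < ⋯ < h_n < 1`, `P` invertible with unit
columns, `B` symmetric positive definite and `ξ_q(B) := lim_{a→∞} λ_q(P D_a B D_a Pᵀ)/a^{2h_q}`
(which exists and is positive), there are `C > 0` and `a₀ > 1` such that for all `a ≥ a₀` and
all `q`, `|λ_q(P D_a B D_a Pᵀ)/a^{2h_q} − ξ_q(B)| ≤ C a^{−γ}`, where
`γ = min_{q₁<q₂}(h_{q₂} − h_{q₁})`. -/
theorem stmt10 {n : ℕ} (hn : 2 ≤ n)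
    (h : Fin n → ℝ) (hmono : StrictMono h)
    (h0 : ∀ i, 0 < h i) (h1 : ∀ i, h i < 1)
    (P : Matrix (Fin n) (Fin n) ℝ) (hP : IsUnit P)
    (hPcol : ∀ j, ∑ i, P i j ^ 2 = 1)
    (B : Matrix (Fin n) (Fin n) ℝ) (hB : B.PosDef)
    (ξ : Fin n → ℝ) (hξpos : ∀ q, 0 < ξ q)
    (hξ : ∀ q : Fin n,
      Tendsto (fun a : ℝ => eigR (P * Dmat h a * B * Dmat h a * Pᵀ) q / a ^ (2 * h q))
        atTop (𝓝 (ξ q)))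
    (γ : ℝ)
    (hγ : IsLeast {d : ℝ | ∃ q₁ q₂ : Fin n, q₁ < q₂ ∧ d = h q₂ - h q₁} γ) :
    ∃ C a₀ : ℝ, 0 < C ∧ 1 < a₀ ∧ ∀ a : ℝ, a₀ ≤ a → ∀ q : Fin n,
      |eigR (P * Dmat h a * B * Dmat h a * Pᵀ) q / a ^ (2 * h q) - ξ q| ≤ C * a ^ (-γ) := by
  have hgap : ∀ i j : Fin n, i < j → γ ≤ h j - h i := fun i j hij => hγ.2 ⟨i, j, hij, rfl⟩
  have hγ0 : 0 < γ := by
    obtain ⟨i, j, hij, hd⟩ := hγ.1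
    rw [hd]
    exact sub_pos.2 (hmono hij)
  set r : Fin n → ℝ → ℝ :=
    fun q a => eigR (P * Dmat h a * B * Dmat h a * Pᵀ) q / a ^ (2 * h q) with hr
  have hO : ∀ q, (fun a => r q a - ξ q) =O[atTop] fun a : ℝ => a ^ (-γ) := by
    intro q
    have h1 := prod_approx h P B hP hB.isHermitian ξ hξ hγ0 hgap (Finset.Ici q)
      (by simpa using isUpperSet_Ici q)
    have h2 := prod_approx h P B hP hB.isHermitian ξ hξ hγ0 hgap (Finset.Ioi q)
      (by simpa using isUpperSet_Ioi q)
    have hlim : Tendsto (fun a : ℝ => ∏ i ∈ Finset.Ioi q, r i a) atTop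
        (𝓝 (∏ i ∈ Finset.Ioi q, ξ i)) := tendsto_finsetProd _ fun i _ => hξ i
    have hpos : 0 < ∏ i ∈ Finset.Ioi q, ξ i := Finset.prod_pos fun i _ => hξpos i
    have hinv : (fun a : ℝ => (∏ i ∈ Finset.Ioi q, r i a)⁻¹) =O[atTop] fun _ : ℝ => (1 : ℝ) :=
      (hlim.inv₀ hpos.ne').isBigO_one ℝ
    -- `r - ξ = ((r p - ξ π) - ξ (p - π)) / p`, with `p`, `π` the products over indices `> q`.
    have h3 := (h1.sub (h2.const_mul_left (ξ q))).mul hinv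
    simp only [mul_one] at h3
    refine h3.congr' ?_ EventuallyEq.rfl
    filter_upwards [hlim.eventually_ne hpos.ne'] with a ha
    have e : ∀ f : Fin n → ℝ, ∏ i ∈ Finset.Ici q, f i = f q * ∏ i ∈ Finset.Ioi q, f i := by
      intro f
      rw [← Finset.Ioi_insert, Finset.prod_insert (by simp)]
    rw [e, e]
    change (r q a * (∏ i ∈ Finset.Ioi q, r i a) - _ - ξ q * (∏ i ∈ Finset.Ioi q, r i a - _)) * _ = _
    field_simp
    ring
  choose C hC0 hC using fun q => (hO q).exists_pos
  have hall : ∀ᶠ a : ℝ in atTop, ∀ q, ‖r q a - ξ q‖ ≤ C q * ‖a ^ (-γ)‖ :=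
    eventually_all.2 fun q => (hC q).bound
  obtain ⟨a₁, ha₁⟩ := eventually_atTop.1 hall
  refine ⟨∑ q, C q, max a₁ 2, ?_, ?_, fun a ha q => ?_⟩
  · exact Finset.sum_pos (fun q _ => hC0 q) ⟨⟨0, by omega⟩, Finset.mem_univ _⟩
  · exact lt_of_lt_of_le one_lt_two (le_max_right _ _)
  · have ha0 : 0 < a := lt_of_lt_of_le two_pos ((le_max_right _ _).trans ha)
    have hp : 0 ≤ a ^ (-γ) := (Real.rpow_pos_of_pos ha0 _).le
    have h1 := ha₁ a ((le_max_left _ _).trans ha) q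
    rw [Real.norm_eq_abs, Real.norm_of_nonneg hp] at h1
    refine h1.trans (mul_le_mul_of_nonneg_right ?_ hp)
    exact Finset.single_le_sum (fun q _ => (hC0 q).le) (Finset.mem_univ q)
end
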